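/- arXiv:2209.10476 — 3 statements merged into one kernel-verified Lean document; each statement's English description precedes it below -/
import Mathlib

section
/- Let G be a bridge-addable class of graphs, A a decomposable subclass of G, and suppose every connected graph H not in A is sublinearly limited in G (k_n(G,H) = o(n)). Then for R_n uniformly random in G_n, P(Frag(R_n) ∈ A) → 1 as n → ∞. -/
/-!
For a bridge-addable class, adding an edge between two components of a member gives a member in which
that edge is a bridge, and the pair (new graph, edge) determines the old graph.  Counting pairs
(graph, oriented crossing pair) against pairs (graph, oriented bridge) in this way
(`sum_crossing_le`) gives two estimates.

* Every vertex has at least `|Frag(G)|` vertices outside its component, so a graph on `n` vertices has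
  at least `n * |Frag(G)|` oriented crossing pairs, while it has at most `2 * n` oriented bridges.
  Hence the mean of `|Frag|` is at most `2`, and Markov's inequality bounds the probability
  of a fragment with more than `t` vertices by `2 / (t + 1)` (`card_large_frag`).
* Suppose the fragment has at most `t` vertices and one of its components is a copy of `H`.  Joining
  that copy to any of the at least `n - t` vertices of the big component produces a pendant copy
  of `H`.  In the new graph, the pendant copies hanging from large pieces are pairwise disjoint, so
  there are at most `k_n(𝒢, H)` of them.  The event has probability at most
  `k_n(𝒢, H) / (n - t)` (`card_frag_component`), which tends to `0` if `H` is sublinearly limited.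

If `Frag(G)` is not in the decomposable class `𝒜`, then either it has more than `t` vertices or it has
a component isomorphic to one of the finitely many connected graphs on at most `t` vertices outside
`𝒜`.  A union bound followed by `t → ∞` finishes the proof.
-/

open Filter

attribute [local instance] Classical.propDecidable

/-- `S` is the vertex set of a connected component of `G`. -/
def IsCompSet {V : Type} (G : SimpleGraph V) (S : Set V) : Prop :=
  ∃ v : V, S = {u | G.Reachable u v}

/-- `B` is the vertex set of a component of `G` with the most vertices. -/
def IsBigSet {V : Type} [Fintype V] (G : SimpleGraph V) (B : Set V) : Prop :=
  IsCompSet G B ∧ ∀ C : Set V, IsCompSet G C → C.ncard ≤ B.ncard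

/-- A canonical choice of the vertex set of a biggest component of `G`. -/
noncomputable def bigSetOf {V : Type} [Fintype V] (G : SimpleGraph V) : Set V :=
  if h : ∃ B : Set V, IsBigSet G B then h.choose else ∅

/-- The fragment of `G`: the graph induced on the complement of a biggest
component. -/
noncomputable def fragOf {V : Type} [Fintype V] (G : SimpleGraph V) :
    SimpleGraph ↥((Set.univ : Set V) \ bigSetOf G) :=
  G.induce ((Set.univ : Set V) \ bigSetOf G)

/-- `G` contains `m` vertex-disjoint copies of `H` (as subgraphs). -/
def HasDisjCopies {h n : ℕ} (H : SimpleGraph (Fin h)) (G : SimpleGraph (Fin n))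
    (m : ℕ) : Prop :=
  ∃ φ : Fin m → (H →g G),
    Function.Injective (fun p : Fin m × Fin h => φ p.1 p.2)

/-- `k_n(𝒢,H)`: the maximum number of vertex-disjoint copies of `H` in a graph of
`𝒢_n`. -/
noncomputable def kMax (𝒢 : ∀ ⦃V : Type⦄ [Fintype V], SimpleGraph V → Prop)
    {h : ℕ} (H : SimpleGraph (Fin h)) (n : ℕ) : ℕ :=
  sSup {m | ∃ G : SimpleGraph (Fin n), 𝒢 G ∧ HasDisjCopies H G m}

/-! ### Counting crossing pairs against bridges -/

/-- Double counting for bridge-addable families: adding the crossing edge `uv` to `G` maps the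
pairs `(G, (u, v))` injectively to pairs (graph, oriented bridge), and `G` is recovered by deleting the
edge.  `D` selects which crossing pairs are counted. -/
lemma sum_crossing_le {V : Type} [Fintype V] (X : Finset (SimpleGraph V))
    (hX : ∀ G ∈ X, ∀ u v : V, ¬ G.Reachable u v → G ⊔ SimpleGraph.fromEdgeSet {s(u, v)} ∈ X)
    (D : SimpleGraph V → V → V → Prop) (hD : ∀ G u v, D G u v → ¬ G.Reachable u v) (N : ℕ)
    (hN : ∀ G ∈ X, (Finset.univ.filter fun p : V × V =>
      G.Adj p.1 p.2 ∧ D (G.deleteEdges {s(p.1, p.2)}) p.1 p.2).card ≤ N) :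
    ∑ G ∈ X, (Finset.univ.filter fun p : V × V => D G p.1 p.2).card ≤ X.card * N := by
  have hdel : ∀ (G : SimpleGraph V) (u v : V), ¬ G.Reachable u v →
      (G ⊔ SimpleGraph.fromEdgeSet {s(u, v)}).deleteEdges {s(u, v)} = G := by
    intro G u v h
    have hna : ¬ G.Adj u v := fun h' => h h'.reachable
    have hna' : ¬ G.Adj v u := fun h' => h h'.symm.reachable
    ext a b
    simp only [SimpleGraph.deleteEdges_adj, SimpleGraph.sup_adj, SimpleGraph.fromEdgeSet_adj,
      Set.mem_singleton_iff, Sym2.eq_iff]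
    constructor
    · tauto
    · intro hab
      refine ⟨Or.inl hab, ?_⟩
      rintro (⟨rfl, rfl⟩ | ⟨rfl, rfl⟩)
      · exact hna hab
      · exact hna' hab
  calc ∑ G ∈ X, (Finset.univ.filter fun p : V × V => D G p.1 p.2).card
      = (X.sigma fun G => Finset.univ.filter fun p : V × V => D G p.1 p.2).card := by
        rw [Finset.card_sigma]
    _ ≤ (X.sigma fun G => Finset.univ.filter fun p : V × V =>
          G.Adj p.1 p.2 ∧ D (G.deleteEdges {s(p.1, p.2)}) p.1 p.2).card := by
        refine Finset.card_le_card_of_injOn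
          (fun q => ⟨q.1 ⊔ SimpleGraph.fromEdgeSet {s(q.2.1, q.2.2)}, q.2⟩) ?_ ?_
        · rintro ⟨G, u, v⟩ hq
          simp only [Finset.coe_sigma, Set.mem_sigma_iff, Finset.mem_coe, Finset.mem_filter,
            Finset.mem_univ, true_and] at hq ⊢
          have hr := hD _ _ _ hq.2
          refine ⟨hX _ hq.1 _ _ hr, ?_, ?_⟩
          · refine Or.inr ⟨rfl, ?_⟩
            rintro rfl
            exact hr (SimpleGraph.Reachable.refl _)
          · rw [hdel _ _ _ hr]; exact hq.2
        · rintro ⟨G, u, v⟩ hq ⟨G', u', v'⟩ hq' h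
          simp only [Finset.coe_sigma, Set.mem_sigma_iff, Finset.mem_coe, Finset.mem_filter,
            Finset.mem_univ, true_and] at hq hq'
          simp only [Sigma.mk.injEq, heq_eq_eq, Prod.mk.injEq] at h
          obtain ⟨h1, rfl, rfl⟩ := h
          have := congrArg (fun K : SimpleGraph V => K.deleteEdges {s(u, v)}) h1
          simp only [hdel _ _ _ (hD _ _ _ hq.2), hdel _ _ _ (hD _ _ _ hq'.2)] at this
          rw [this]
    _ = ∑ G ∈ X, (Finset.univ.filter fun p : V × V =>
          G.Adj p.1 p.2 ∧ D (G.deleteEdges {s(p.1, p.2)}) p.1 p.2).card := by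
        rw [Finset.card_sigma]
    _ ≤ X.card * N := by
        simpa using Finset.sum_le_card_nsmul X _ N hN

/-- The bridges of a graph form a forest, which extends to a tree on all of `V`. -/
lemma card_bridges_le {V : Type} [Fintype V] (G : SimpleGraph V) :
    (Finset.univ.filter fun p : V × V =>
      G.Adj p.1 p.2 ∧ ¬ (G.deleteEdges {s(p.1, p.2)}).Reachable p.1 p.2).card
      ≤ 2 * Fintype.card V := by
  rcases isEmpty_or_nonempty V with hV | hV
  · simp [Finset.univ_eq_empty]
  let F : SimpleGraph V :=
    { Adj := fun u v => G.Adj u v ∧ G.IsBridge s(u, v)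
      symm := ⟨fun u v h => ⟨h.1.symm, by rw [Sym2.eq_swap]; exact h.2⟩⟩
      loopless := ⟨fun u h => G.loopless.irrefl u h.1⟩ }
  have hFG : F ≤ G := fun u v h => h.1
  have hF : F.IsAcyclic := by
    rw [SimpleGraph.isAcyclic_iff_forall_adj_isBridge]
    intro u v h
    exact SimpleGraph.IsBridge.anti hFG h.2
  obtain ⟨T, hFT, hT⟩ := SimpleGraph.exists_maximal_isAcyclic_of_le_isAcyclic
    (le_top : F ≤ ⊤) hF
  have hT' : T.IsTree := by
    rw [SimpleGraph.isTree_iff_maximal_isAcyclic]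
    refine ⟨hV, hT.prop.2, ?_⟩
    intro T' h1 h2
    exact hT.2 ⟨le_top, h1⟩ h2
  have hc := hT'.card_edgeFinset
  have hd := T.sum_degrees_eq_twice_card_edges
  have hsub : (Finset.univ.filter fun p : V × V =>
      G.Adj p.1 p.2 ∧ ¬ (G.deleteEdges {s(p.1, p.2)}).Reachable p.1 p.2).card ≤
      (Finset.univ.sigma fun u : V => T.neighborFinset u).card := by
    refine Finset.card_le_card_of_injOn (fun p => ⟨p.1, p.2⟩) ?_ ?_
    · rintro ⟨u, v⟩ h
      simp only [Finset.coe_filter, Finset.mem_univ, true_and, Set.mem_ofPred_eq] at h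
      simp only [Finset.coe_sigma, Set.mem_sigma_iff, Finset.mem_coe, Finset.mem_univ,
        SimpleGraph.mem_neighborFinset, true_and]
      exact hFT ⟨h.1, h.2⟩
    · rintro ⟨u, v⟩ _ ⟨u', v'⟩ _ h
      simpa using h
  rw [Finset.card_sigma] at hsub
  simp only [SimpleGraph.card_neighborFinset_eq_degree] at hsub
  omega

/-! ### The size of the fragment -/

lemma bigSetOf_isBigSet {V : Type} [Fintype V] [Nonempty V] (G : SimpleGraph V) :
    IsBigSet G (bigSetOf G) := by
  have h : ∃ B : Set V, IsBigSet G B := by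
    obtain ⟨v, hv⟩ := Finite.exists_max (fun v : V => {u | G.Reachable u v}.ncard)
    refine ⟨{u | G.Reachable u v}, ⟨v, rfl⟩, ?_⟩
    rintro C ⟨w, rfl⟩
    exact hv w
  rw [bigSetOf, dif_pos h]
  exact h.choose_spec

lemma card_mul_frag_le {V : Type} [Fintype V] (G : SimpleGraph V) :
    Fintype.card V * ((Set.univ : Set V) \ bigSetOf G).ncard ≤
      (Finset.univ.filter fun p : V × V => ¬ G.Reachable p.1 p.2).card := by
  rcases isEmpty_or_nonempty V with hV | hV
  · simp
  have hB := bigSetOf_isBigSet G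
  have h1 : (Finset.univ.filter fun p : V × V => ¬ G.Reachable p.1 p.2).card =
      ∑ u : V, (Finset.univ.filter fun v : V => ¬ G.Reachable u v).card := by
    rw [← Finset.card_sigma]
    refine Finset.card_bij (fun p _ => ⟨p.1, p.2⟩) ?_ ?_ ?_
    · rintro ⟨u, v⟩ h; simpa using h
    · rintro ⟨u, v⟩ _ ⟨u', v'⟩ _ h; simpa using h
    · rintro ⟨u, v⟩ h; exact ⟨(u, v), by simpa using h, rfl⟩
  rw [h1, ← smul_eq_mul, ← Finset.card_univ]
  refine Finset.card_nsmul_le_sum _ _ _ ?_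
  intro u _
  have h2 : (Finset.univ.filter fun v : V => ¬ G.Reachable u v).card =
      ((Set.univ : Set V) \ {v | G.Reachable v u}).ncard := by
    rw [← Set.ncard_coe_finset]
    congr 1
    ext v
    simp [SimpleGraph.reachable_comm]
  rw [h2]
  have h3 := hB.2 _ ⟨u, rfl⟩
  have h4 := Set.ncard_sdiff_add_ncard_of_subset (Set.subset_univ (bigSetOf G))
  have h5 := Set.ncard_sdiff_add_ncard_of_subset (Set.subset_univ {v | G.Reachable v u})
  omega

/-- Markov's inequality for the fragment size, whose mean over a bridge-addable family is at
most `2`. -/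
lemma card_large_frag {V : Type} [Fintype V] [Nonempty V] (X : Finset (SimpleGraph V))
    (hX : ∀ G ∈ X, ∀ u v : V, ¬ G.Reachable u v → G ⊔ SimpleGraph.fromEdgeSet {s(u, v)} ∈ X)
    (t : ℕ) :
    (t + 1) * (X.filter fun G => t < ((Set.univ : Set V) \ bigSetOf G).ncard).card
      ≤ 2 * X.card := by
  have h0 := sum_crossing_le X hX (fun G u v => ¬ G.Reachable u v) (fun _ _ _ h => h)
    (2 * Fintype.card V) (fun G _ => by convert card_bridges_le G)
  have h1 : ∑ G ∈ X, (Finset.univ.filter fun p : V × V => ¬ G.Reachable p.1 p.2).card ≤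
      X.card * (2 * Fintype.card V) := by convert h0
  have h2 : ∑ G ∈ X, Fintype.card V * ((Set.univ : Set V) \ bigSetOf G).ncard ≤
      X.card * (2 * Fintype.card V) :=
    (Finset.sum_le_sum fun G _ => card_mul_frag_le G).trans h1
  rw [← Finset.mul_sum] at h2
  have hpos : 0 < Fintype.card V := Fintype.card_pos
  have h3 : ∑ G ∈ X, ((Set.univ : Set V) \ bigSetOf G).ncard ≤ 2 * X.card := by
    refine Nat.le_of_mul_le_mul_left ?_ hpos
    calc _ ≤ _ := h2
      _ = _ := by ring
  refine le_trans ?_ h3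
  calc (t + 1) * (X.filter fun G => t < ((Set.univ : Set V) \ bigSetOf G).ncard).card
      = (X.filter fun G => t < ((Set.univ : Set V) \ bigSetOf G).ncard).card • (t + 1) := by
        rw [smul_eq_mul, mul_comm]
    _ ≤ ∑ G ∈ X.filter fun G => t < ((Set.univ : Set V) \ bigSetOf G).ncard,
          ((Set.univ : Set V) \ bigSetOf G).ncard := by
        refine Finset.card_nsmul_le_sum _ _ _ ?_
        intro G hG
        exact (Finset.mem_filter.1 hG).2
    _ ≤ _ := Finset.sum_le_sum_of_subset (Finset.filter_subset _ _)

/-! ### Pendant copies -/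

/-- Let `S` be the component of `u'` in `G - u'v'`.  A component of `G - e` that meets `S` and
misses one end of `u'v'` lies in `S`, since `u'v'` is the only edge that can leave `S`. -/
lemma comp_subset_pendant {V : Type} {G : SimpleGraph V} {e : Sym2 V} {u' v' x y z : V}
    (hx : (G.deleteEdges {e}).Reachable x z)
    (hxS : (G.deleteEdges {s(u', v')}).Reachable x u')
    (hmiss : ¬ ((G.deleteEdges {e}).Reachable u' z ∧ (G.deleteEdges {e}).Reachable v' z))
    (hy : (G.deleteEdges {e}).Reachable y z) :
    (G.deleteEdges {s(u', v')}).Reachable y u' := by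
  obtain ⟨p⟩ := hx.trans hy.symm
  induction p with
  | nil => exact hxS
  | @cons a b c hab p ih =>
    have hb : (G.deleteEdges {e}).Reachable b z := hab.reachable.symm.trans hx
    refine ih hb ?_ hy
    by_cases hs : s(a, b) = s(u', v')
    · exfalso
      apply hmiss
      rcases Sym2.eq_iff.1 hs with ⟨rfl, rfl⟩ | ⟨rfl, rfl⟩
      · exact ⟨hx, hb⟩
      · exact ⟨hb, hx⟩
    · have : (G.deleteEdges {s(u', v')}).Adj a b := by
        rw [SimpleGraph.deleteEdges_adj] at hab ⊢
        exact ⟨hab.1, hs⟩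
      exact this.reachable.symm.trans hxS

/-- If `u'v'` cuts off a part of size `k` at `u'`, meeting the part of size `k` cut off at `u` by
`uv`, and the part at `v` is larger than `k`, then `v` is not in the part at `u'`. -/
lemma not_mem_pendant {V : Type} [Fintype V] {G : SimpleGraph V} {u v u' v' x : V} {k : ℕ}
    (huv : ¬ (G.deleteEdges {s(u, v)}).Reachable u v)
    (hS : {w | (G.deleteEdges {s(u, v)}).Reachable w u}.ncard = k)
    (hT : k < {w | (G.deleteEdges {s(u, v)}).Reachable w v}.ncard)
    (hS' : {w | (G.deleteEdges {s(u', v')}).Reachable w u'}.ncard = k)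
    (hx : (G.deleteEdges {s(u, v)}).Reachable x u)
    (hx' : (G.deleteEdges {s(u', v')}).Reachable x u') :
    ¬ (G.deleteEdges {s(u', v')}).Reachable v u' := by
  intro hv
  -- The part at `v` is too large to lie inside the part at `u'`, so it contains both ends of `u'v'`.
  have h1 : (G.deleteEdges {s(u, v)}).Reachable v' v := by
    by_contra hcon
    have hsub : {w | (G.deleteEdges {s(u, v)}).Reachable w v} ⊆
        {w | (G.deleteEdges {s(u', v')}).Reachable w u'} := fun y hy =>
      comp_subset_pendant (SimpleGraph.Reachable.refl v) hv (fun h => hcon h.2) hy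
    have := Set.ncard_le_ncard hsub
    omega
  have h2 : ¬ (G.deleteEdges {s(u, v)}).Reachable v' u := fun h => huv (h.symm.trans h1)
  have hsub : insert v {w | (G.deleteEdges {s(u, v)}).Reachable w u} ⊆
      {w | (G.deleteEdges {s(u', v')}).Reachable w u'} := by
    rintro y (rfl | hy)
    · exact hv
    · exact comp_subset_pendant hx hx' (fun h => h2 h.2) hy
  have h3 := Set.ncard_le_ncard hsub
  have hvn : v ∉ {w | (G.deleteEdges {s(u, v)}).Reachable w u} := fun h => huv h.symm
  rw [Set.ncard_insert_of_notMem hvn] at h3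
  omega

/-- Two intersecting pendant parts of the same size `k`, both attached to parts larger than `k`, are
cut off by the same oriented edge. -/
lemma pendant_unique {V : Type} [Fintype V] {G : SimpleGraph V} {u v u' v' x : V} {k : ℕ}
    (ha' : G.Adj u' v')
    (huv : ¬ (G.deleteEdges {s(u, v)}).Reachable u v)
    (huv' : ¬ (G.deleteEdges {s(u', v')}).Reachable u' v')
    (hS : {w | (G.deleteEdges {s(u, v)}).Reachable w u}.ncard = k)
    (hT : k < {w | (G.deleteEdges {s(u, v)}).Reachable w v}.ncard)
    (hS' : {w | (G.deleteEdges {s(u', v')}).Reachable w u'}.ncard = k)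
    (hT' : k < {w | (G.deleteEdges {s(u', v')}).Reachable w v'}.ncard)
    (hx : (G.deleteEdges {s(u, v)}).Reachable x u)
    (hx' : (G.deleteEdges {s(u', v')}).Reachable x u') : u = u' ∧ v = v' := by
  have hv := not_mem_pendant huv hS hT hS' hx hx'
  have hv' := not_mem_pendant huv' hS' hT' hS hx' hx
  have hmem : (G.deleteEdges {s(u, v)}).Reachable u' u :=
    comp_subset_pendant hx' hx (fun h => hv h.2) (SimpleGraph.Reachable.refl _)
  -- `u'v'` leaves the part at `u`, so it equals `uv`.
  by_contra hne
  apply hv'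
  have : (G.deleteEdges {s(u, v)}).Adj u' v' := by
    rw [SimpleGraph.deleteEdges_adj]
    refine ⟨ha', ?_⟩
    intro h
    rcases Sym2.eq_iff.1 (Set.mem_singleton_iff.1 h) with ⟨rfl, rfl⟩ | ⟨rfl, rfl⟩
    · exact hne ⟨rfl, rfl⟩
    · exact huv hmem.symm
  exact this.reachable.symm.trans hmem

/-- Joining a fragment component isomorphic to `H` to the big component creates one of at most `K`
pendant copies of `H`, and there are at least `n - t` ways to do so. -/
lemma card_frag_component {n k : ℕ} (X : Finset (SimpleGraph (Fin n)))
    (hX : ∀ G ∈ X, ∀ u v : Fin n, ¬ G.Reachable u v →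
      G ⊔ SimpleGraph.fromEdgeSet {s(u, v)} ∈ X)
    (H : SimpleGraph (Fin k)) (t K : ℕ) (hn : k + t < n)
    (hK : ∀ G ∈ X, ∀ m, HasDisjCopies H G m → m ≤ K) :
    (n - t) * (X.filter fun G => ((Set.univ : Set (Fin n)) \ bigSetOf G).ncard ≤ t ∧
      ∃ u, u ∉ bigSetOf G ∧ Nonempty (H ≃g G.induce {w | G.Reachable w u})).card
      ≤ X.card * K := by
  have : Nonempty (Fin n) := ⟨⟨0, by omega⟩⟩
  obtain ⟨D, hDiff⟩ : ∃ D : SimpleGraph (Fin n) → Fin n → Fin n → Prop, ∀ G u v, D G u v ↔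
      ¬ G.Reachable u v ∧ Nonempty (H ≃g G.induce {w | G.Reachable w u}) ∧
        n - t ≤ {w | G.Reachable w v}.ncard := ⟨_, fun _ _ _ => Iff.rfl⟩
  have hiso : ∀ (G : SimpleGraph (Fin n)) (S : Set (Fin n)),
      Nonempty (H ≃g G.induce S) → S.ncard = k := by
    rintro G S ⟨f⟩
    have := Nat.card_congr f.toEquiv
    rw [Nat.card_eq_fintype_card, Fintype.card_fin] at this
    rw [this]; rfl
  have h1 := sum_crossing_le X hX D (fun _ _ _ h => ((hDiff _ _ _).1 h).1) K ?_
  · refine le_trans ?_ h1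
    rw [mul_comm, ← smul_eq_mul]
    refine le_trans (Finset.card_nsmul_le_sum _
      (fun G => (Finset.univ.filter fun p : Fin n × Fin n => D G p.1 p.2).card) _ ?_)
      (Finset.sum_le_sum_of_subset (Finset.filter_subset _ _))
    intro G hG
    obtain ⟨_, hf, u, hu, hH⟩ := Finset.mem_filter.1 hG
    obtain ⟨⟨b, hb⟩, _⟩ := bigSetOf_isBigSet G
    have h4 := Set.ncard_sdiff_add_ncard_of_subset (Set.subset_univ (bigSetOf G))
    rw [Set.ncard_univ, Nat.card_eq_fintype_card, Fintype.card_fin] at h4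
    have h5 : (bigSetOf G).ncard ≤
        (Finset.univ.filter fun p : Fin n × Fin n => D G p.1 p.2).card := by
      rw [Set.ncard_eq_toFinset_card']
      refine Finset.card_le_card_of_injOn (fun v => (u, v)) ?_ ?_
      · intro v hv
        have hv : v ∈ bigSetOf G := by simpa using hv
        simp only [Finset.coe_filter, Finset.mem_univ, true_and, Set.mem_ofPred_eq]
        have hvb : G.Reachable v b := by rw [hb] at hv; exact hv
        refine (hDiff _ _ _).2 ⟨?_, hH, ?_⟩
        · intro h
          apply hu
          rw [hb]
          exact h.trans hvb
        · have : {w | G.Reachable w v} = bigSetOf G := by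
            rw [hb]
            ext w
            exact ⟨fun h => h.trans hvb, fun h => h.trans hvb.symm⟩
          rw [this]; omega
      · intro v _ v' _ h
        simpa using h
    show n - t ≤ _
    omega
  · intro G hG
    refine hK G hG _ ?_
    set P := Finset.univ.filter fun p : Fin n × Fin n =>
      G.Adj p.1 p.2 ∧ D (G.deleteEdges {s(p.1, p.2)}) p.1 p.2 with hP
    have hmem : ∀ i : Fin P.card, G.Adj (P.equivFin.symm i).1.1 (P.equivFin.symm i).1.2 ∧
        _ := fun i =>
      (Finset.mem_filter.1 (P.equivFin.symm i).2).2.imp_right (hDiff _ _ _).1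
    refine ⟨fun i => ⟨fun j => ((hmem i).2.2.1.some j).1, ?_⟩, ?_⟩
    · intro a b hab
      have := ((hmem i).2.2.1.some).map_rel_iff.2 hab
      exact SimpleGraph.deleteEdges_le _ this
    · rintro ⟨i, j⟩ ⟨i', j'⟩ h
      have h : ((hmem i).2.2.1.some j).1 = ((hmem i').2.2.1.some j').1 := h
      have hx := ((hmem i).2.2.1.some j).2
      have hx' := ((hmem i').2.2.1.some j').2
      rw [← h] at hx'
      have hq := pendant_unique (hmem i').1 (hmem i).2.1 (hmem i').2.1
        (hiso _ _ (hmem i).2.2.1) (lt_of_lt_of_le (by omega) (hmem i).2.2.2)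
        (hiso _ _ (hmem i').2.2.1) (lt_of_lt_of_le (by omega) (hmem i').2.2.2) hx hx'
      have hii : i = i' := by
        apply P.equivFin.symm.injective
        apply Subtype.ext
        exact Prod.ext hq.1 hq.2
      subst hii
      have : j = j' := (hmem i).2.2.1.some.injective (Subtype.ext h)
      rw [this]

lemma le_kMax (𝒢 : ∀ ⦃V : Type⦄ [Fintype V], SimpleGraph V → Prop) {h n : ℕ} (hh : 0 < h)
    (H : SimpleGraph (Fin h)) (G : SimpleGraph (Fin n)) (hG : 𝒢 G) (m : ℕ)
    (hm : HasDisjCopies H G m) : m ≤ kMax 𝒢 H n := by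
  refine le_csSup ⟨n, ?_⟩ ⟨G, hG, hm⟩
  rintro m ⟨G, _, φ, hφ⟩
  have := Fintype.card_le_of_injective _ hφ
  simp only [Fintype.card_prod, Fintype.card_fin] at this
  nlinarith

/-! ### Components of the fragment -/

/-- A component of the fragment is a component of the whole graph. -/
lemma exists_bad_component (𝒜 : ∀ ⦃V : Type⦄ [Fintype V], SimpleGraph V → Prop)
    (hAiso : ∀ (V W : Type) [Fintype V] [Fintype W] (G : SimpleGraph V)
      (H : SimpleGraph W), Nonempty (G ≃g H) → 𝒜 G → 𝒜 H)
    (hdec : ∀ (V : Type) [Fintype V] (G : SimpleGraph V),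
      𝒜 G ↔ ∀ c : G.ConnectedComponent, 𝒜 (G.induce c.supp))
    {n : ℕ} [Nonempty (Fin n)] (G : SimpleGraph (Fin n)) (hG : ¬ 𝒜 (fragOf G)) :
    ∃ k ≤ ((Set.univ : Set (Fin n)) \ bigSetOf G).ncard, ∃ H : SimpleGraph (Fin k),
      H.Connected ∧ ¬ 𝒜 H ∧
        ∃ u, u ∉ bigSetOf G ∧ Nonempty (H ≃g G.induce {w | G.Reachable w u}) := by
  rw [hdec] at hG
  push Not at hG
  obtain ⟨c, hc⟩ := hG
  obtain ⟨⟨u, hu⟩, rfl⟩ := c.exists_rep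
  have huB : u ∉ bigSetOf G := hu.2
  obtain ⟨⟨b, hb⟩, _⟩ := bigSetOf_isBigSet G
  have hout : ∀ w, G.Reachable w u → w ∉ bigSetOf G := by
    intro w hw hwB
    rw [hb] at hwB huB
    exact huB (hw.symm.trans hwB)
  have hlift : ∀ w w', G.Walk w w' → ∀ (hw : w ∈ (Set.univ : Set (Fin n)) \ bigSetOf G)
      (hw' : w' ∈ (Set.univ : Set (Fin n)) \ bigSetOf G), G.Reachable w u →
      (fragOf G).Reachable ⟨w, hw⟩ ⟨w', hw'⟩ := by
    intro w w' p
    induction p with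
    | nil => intro _ _ _; exact SimpleGraph.Reachable.refl _
    | @cons a b c hab p ih =>
      intro hw hw' hr
      have hbr : G.Reachable b u := hab.reachable.symm.trans hr
      have hbm : b ∈ (Set.univ : Set (Fin n)) \ bigSetOf G := ⟨trivial, hout b hbr⟩
      have h1 : (fragOf G).Adj ⟨a, hw⟩ ⟨b, hbm⟩ := hab
      exact h1.reachable.trans (ih hbm hw' hbr)
  set S : Set (Fin n) := {w | G.Reachable w u} with hS
  set C : Set ↥((Set.univ : Set (Fin n)) \ bigSetOf G) :=
    SimpleGraph.ConnectedComponent.supp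
      (Quot.mk (fragOf G).Reachable ⟨u, hu⟩ : (fragOf G).ConnectedComponent) with hC
  have hCmem : ∀ x, x ∈ C ↔ G.Reachable x.1 u := by
    intro x
    have h0 : x ∈ C ↔ (fragOf G).Reachable x ⟨u, hu⟩ := SimpleGraph.ConnectedComponent.eq
    rw [h0]
    constructor
    · intro h
      exact h.map (SimpleGraph.Embedding.induce _).toHom
    · intro h
      obtain ⟨p⟩ := h
      exact hlift _ _ p x.2 hu ⟨p⟩
  let e : (fragOf G).induce C ≃g G.induce S :=
    { toFun := fun x => ⟨x.1.1, (hCmem x.1).1 x.2⟩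
      invFun := fun x => ⟨⟨x.1, trivial, hout _ x.2⟩, (hCmem _).2 x.2⟩
      left_inv := fun x => rfl
      right_inv := fun x => rfl
      map_rel_iff' := Iff.rfl }
  have hSc : (G.induce S).Connected := by
    have hCc : ((fragOf G).induce C).Connected :=
      SimpleGraph.ConnectedComponent.connected_toSimpleGraph
        (Quot.mk (fragOf G).Reachable ⟨u, hu⟩ : (fragOf G).ConnectedComponent)
    exact e.connected_iff.1 hCc
  have hcard : Fintype.card S = S.ncard := by
    rw [← Nat.card_eq_fintype_card]; rfl
  let f : Fin S.ncard ≃ S := (Fintype.equivFinOfCardEq hcard).symm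
  let g : (G.induce S).comap f ≃g G.induce S := SimpleGraph.Iso.comap f _
  refine ⟨S.ncard, Set.ncard_le_ncard fun w hw => ⟨trivial, hout w hw⟩, (G.induce S).comap f,
    g.connected_iff.2 hSc, ?_, u, huB, ⟨g⟩⟩
  intro hA
  have hAiso' : ∀ (V W : Type) (iV : Fintype V) (iW : Fintype W) (G : SimpleGraph V)
      (H : SimpleGraph W), Nonempty (G ≃g H) → 𝒜 G → 𝒜 H := fun V W _ _ => hAiso V W
  exact hc (hAiso' _ _ _ _ _ _ ⟨g.trans e.symm⟩ hA)

/-- Let `𝒢` be a bridge-addable class of graphs, `𝒜` a decomposable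
subclass of `𝒢`, and suppose every connected graph `H` not in `𝒜` is sublinearly
limited in `𝒢` (`k_n(𝒢,H) = o(n)`).  Then for `R_n` uniformly random in `𝒢_n`,
`P(Frag(R_n) ∈ 𝒜) → 1` as `n → ∞`. -/
theorem stmt_15 (𝒢 𝒜 : ∀ ⦃V : Type⦄ [Fintype V], SimpleGraph V → Prop)
    (hGiso : ∀ (V W : Type) [Fintype V] [Fintype W] (G : SimpleGraph V)
      (H : SimpleGraph W), Nonempty (G ≃g H) → 𝒢 G → 𝒢 H)
    (hAiso : ∀ (V W : Type) [Fintype V] [Fintype W] (G : SimpleGraph V)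
      (H : SimpleGraph W), Nonempty (G ≃g H) → 𝒜 G → 𝒜 H)
    (hba : ∀ (V : Type) [Fintype V] (G : SimpleGraph V) (u v : V),
      𝒢 G → ¬ G.Reachable u v → 𝒢 (G ⊔ SimpleGraph.fromEdgeSet {s(u, v)}))
    (hsub : ∀ (V : Type) [Fintype V] (G : SimpleGraph V), 𝒜 G → 𝒢 G)
    (hdec : ∀ (V : Type) [Fintype V] (G : SimpleGraph V),
      𝒜 G ↔ ∀ c : G.ConnectedComponent, 𝒜 (G.induce c.supp))
    (hlim : ∀ (h : ℕ) (H : SimpleGraph (Fin h)), H.Connected → ¬ 𝒜 H →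
      Tendsto (fun n : ℕ => (kMax 𝒢 H n : ℝ) / (n : ℝ)) atTop (nhds 0))
    (hne : ∀ n : ℕ, {G : SimpleGraph (Fin n) | 𝒢 G}.Nonempty) :
    Tendsto (fun n : ℕ =>
        (Set.ncard {G : SimpleGraph (Fin n) | 𝒢 G ∧ 𝒜 (fragOf G)} : ℝ) /
          (Set.ncard {G : SimpleGraph (Fin n) | 𝒢 G} : ℝ))
      atTop (nhds 1) := by
  -- `X n` is `𝒢_n` as a finset, and `Y n` its members whose fragment is not in `𝒜`.
  set X : ∀ n : ℕ, Finset (SimpleGraph (Fin n)) := fun n => Finset.univ.filter fun G => 𝒢 G with hXdef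
  set Y : ∀ n : ℕ, Finset (SimpleGraph (Fin n)) := fun n => (X n).filter fun G => ¬ 𝒜 (fragOf G)
    with hYdef
  have hXpos : ∀ n, 0 < ((X n).card : ℝ) := by
    intro n
    obtain ⟨G, hG⟩ := hne n
    have : G ∈ X n := Finset.mem_filter.2 ⟨Finset.mem_univ _, hG⟩
    exact_mod_cast Finset.card_pos.2 ⟨G, this⟩
  have hXba : ∀ n, ∀ G ∈ X n, ∀ u v : Fin n, ¬ G.Reachable u v →
      G ⊔ SimpleGraph.fromEdgeSet {s(u, v)} ∈ X n := by
    intro n G hG u v huv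
    exact Finset.mem_filter.2 ⟨Finset.mem_univ _, hba _ G u v (Finset.mem_filter.1 hG).2 huv⟩
  have hratio : ∀ n : ℕ,
      (Set.ncard {G : SimpleGraph (Fin n) | 𝒢 G ∧ 𝒜 (fragOf G)} : ℝ) /
          (Set.ncard {G : SimpleGraph (Fin n) | 𝒢 G} : ℝ) = 1 - (Y n).card / (X n).card := by
    intro n
    have h1 : Set.ncard {G : SimpleGraph (Fin n) | 𝒢 G} = (X n).card := by
      rw [← Set.ncard_coe_finset]; congr 1; ext G; simp [hXdef]
    have h2 : Set.ncard {G : SimpleGraph (Fin n) | 𝒢 G ∧ 𝒜 (fragOf G)} =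
        ((X n).filter fun G => 𝒜 (fragOf G)).card := by
      rw [← Set.ncard_coe_finset]; congr 1; ext G; simp [hXdef]
    have h3 := Finset.card_filter_add_card_filter_not (s := X n) (fun G => 𝒜 (fragOf G))
    have h3' : (((X n).filter fun G => 𝒜 (fragOf G)).card : ℝ) + (Y n).card = (X n).card := by
      exact_mod_cast h3
    rw [h1, h2, eq_sub_iff_add_eq, ← add_div, h3', div_self (hXpos n).ne']
  simp_rw [hratio]
  suffices hY : Tendsto (fun n : ℕ => ((Y n).card : ℝ) / (X n).card) atTop (nhds 0) by
    simpa using (tendsto_const_nhds (x := (1 : ℝ))).sub hY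
  -- The union bound, for each threshold `t` on the fragment size.
  let I : ∀ t : ℕ, Finset (Σ k : Fin (t + 1), SimpleGraph (Fin k)) := fun t =>
    Finset.univ.filter fun q => q.2.Connected ∧ ¬ 𝒜 q.2
  have hbound : ∀ t n : ℕ, 2 * t < n → ((Y n).card : ℝ) / (X n).card ≤
      2 / (t + 1) + ∑ q ∈ I t, 2 * ((kMax 𝒢 q.2 n : ℝ) / n) := by
    intro t n hn
    have : Nonempty (Fin n) := ⟨⟨0, by omega⟩⟩
    set L := (X n).filter fun G => t < ((Set.univ : Set (Fin n)) \ bigSetOf G).ncard with hL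
    set Z : (Σ k : Fin (t + 1), SimpleGraph (Fin k)) → Finset (SimpleGraph (Fin n)) := fun q =>
      (X n).filter fun G => ((Set.univ : Set (Fin n)) \ bigSetOf G).ncard ≤ t ∧
        ∃ u, u ∉ bigSetOf G ∧ Nonempty (q.2 ≃g G.induce {w | G.Reachable w u}) with hZ
    have hsubset : Y n ⊆ L ∪ (I t).biUnion Z := by
      intro G hG
      obtain ⟨hGX, hGA⟩ := Finset.mem_filter.1 hG
      rw [Finset.mem_union]
      by_cases ht : t < ((Set.univ : Set (Fin n)) \ bigSetOf G).ncard
      · exact Or.inl (Finset.mem_filter.2 ⟨hGX, ht⟩)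
      · obtain ⟨k, hk, H, hHc, hHA, hu⟩ := exists_bad_component 𝒜 hAiso hdec G hGA
        refine Or.inr (Finset.mem_biUnion.2 ⟨⟨⟨k, by omega⟩, H⟩, ?_, ?_⟩)
        · exact Finset.mem_filter.2 ⟨Finset.mem_univ _, hHc, hHA⟩
        · exact Finset.mem_filter.2 ⟨hGX, by omega, hu⟩
    have hcard : (Y n).card ≤ L.card + ∑ q ∈ I t, (Z q).card :=
      (Finset.card_le_card hsubset).trans ((Finset.card_union_le _ _).trans
        (Nat.add_le_add_left Finset.card_biUnion_le _))
    have hcard' : ((Y n).card : ℝ) ≤ L.card + ∑ q ∈ I t, ((Z q).card : ℝ) := by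
      exact_mod_cast hcard
    have hx := hXpos n
    have hLb : (L.card : ℝ) / (X n).card ≤ 2 / (t + 1) := by
      have h := card_large_frag (X n) (hXba n) t
      have h' : ((t : ℝ) + 1) * L.card ≤ 2 * (X n).card := by exact_mod_cast h
      rw [div_le_div_iff₀ hx (by positivity)]
      linarith
    have hZb : ∀ q ∈ I t, ((Z q).card : ℝ) / (X n).card ≤ 2 * ((kMax 𝒢 q.2 n : ℝ) / n) := by
      rintro ⟨⟨k, hk⟩, H⟩ hq
      obtain ⟨hHc, _⟩ := (Finset.mem_filter.1 hq).2
      have hk0 : 0 < k := by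
        obtain ⟨i⟩ := hHc.nonempty
        exact i.pos
      have h := card_frag_component (X n) (hXba n) H t (kMax 𝒢 H n) (by omega)
        (fun G hG m hm => le_kMax 𝒢 hk0 H G (Finset.mem_filter.1 hG).2 m hm)
      have h' : (((n - t : ℕ) : ℝ)) * (Z ⟨⟨k, hk⟩, H⟩).card ≤ (X n).card * kMax 𝒢 H n := by
        exact_mod_cast h
      have hnt : (n : ℝ) ≤ 2 * ((n - t : ℕ) : ℝ) := by
        have : n ≤ 2 * (n - t) := by omega
        exact_mod_cast this
      have hn0 : (0 : ℝ) < n := by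
        have : 0 < n := by omega
        exact_mod_cast this
      rw [← mul_div_assoc, div_le_div_iff₀ hx hn0]
      have hz : (0 : ℝ) ≤ (Z ⟨⟨k, hk⟩, H⟩).card := Nat.cast_nonneg _
      nlinarith
    calc ((Y n).card : ℝ) / (X n).card
        ≤ (L.card + ∑ q ∈ I t, ((Z q).card : ℝ)) / (X n).card := by gcongr
      _ = (L.card : ℝ) / (X n).card + ∑ q ∈ I t, ((Z q).card : ℝ) / (X n).card := by
        rw [add_div, Finset.sum_div]
      _ ≤ _ := add_le_add hLb (Finset.sum_le_sum hZb)
  rw [Metric.tendsto_atTop]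
  intro ε hε
  obtain ⟨t, ht⟩ := exists_nat_gt (4 / ε)
  have ht2 : 2 / ((t : ℝ) + 1) < ε / 2 := by
    rw [div_lt_iff₀ hε] at ht
    rw [div_lt_div_iff₀ (by positivity) (by norm_num)]
    nlinarith
  have hlim0 : Tendsto (fun n : ℕ => ∑ q ∈ I t, 2 * ((kMax 𝒢 q.2 n : ℝ) / n)) atTop (nhds 0) := by
    have h : ∀ q ∈ I t, Tendsto (fun n : ℕ => 2 * ((kMax 𝒢 q.2 n : ℝ) / n)) atTop (nhds 0) := by
      intro q hq
      obtain ⟨hc, hA⟩ := (Finset.mem_filter.1 hq).2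
      simpa using (hlim _ q.2 hc hA).const_mul 2
    simpa using tendsto_finsetSum (I t) h
  obtain ⟨N, hN⟩ := (Metric.tendsto_atTop.1 hlim0) (ε / 2) (by linarith)
  refine ⟨max N (2 * t + 1), fun n hn => ?_⟩
  have h1 := hbound t n (by have := le_of_max_le_right hn; omega)
  have h2 := (abs_lt.1 (by simpa [Real.dist_eq] using hN n (le_of_max_le_left hn))).2
  rw [Real.dist_eq, sub_zero, abs_of_nonneg (div_nonneg (Nat.cast_nonneg _) (Nat.cast_nonneg _))]
  linarith
end

section
/- Let G be a decomposable and trimmable graph class with G^{δ≥2} nonempty, let ρ_0 > 0 satisfy G(ρ_0) < ∞, and let ρ_2 = T•(ρ_0) where T•(x) = ∑_{n≥1} n^{n-1} x^n/n! is the rooted-tree EGF. Then ρ_2 satisfies ρ_2 e^{-ρ_2} = ρ_0 with 0 < ρ_2 < 1 (when ρ_0 < 1/e), and G^{δ≥2}(ρ_2) < ∞; moreover G(ρ_0) = G^{δ≥2}(ρ_2) · F(ρ_0), where F is the EGF of forests. -/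
/-!
The identity `G(x) = G^{δ≥2}(T•(x)) F(x)` is obtained by summing a count of graphs layer by layer.

Fix the 2-core of a graph: its vertex set `S` and the graph it carries. By trimmability, membership
in the class depends on that core only, and the remaining edges form a graph satisfying `IsExt`:
no nonempty vertex set `W` outside `S` has all its vertices of degree at least 2 towards `W ∪ S`
(`card_core_eq`). Such an extension is described by its first layer, the set `L` of vertices
adjacent to `S`: each of them has exactly one neighbour in `S`, there is no edge inside `L`, and
deleting `S` leaves an extension of `L` (`layer_card`). Hence the number `r(k, n)` of extensions of
`k` core vertices by `n` vertices satisfies `r(0, n) = #forests` and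
`r(k, n) = ∑ᵢ C(n, i) kⁱ r(i, n - i)` (`card_isExt`).

For the generating functions in `n`, the recursion reads `R_k(x) = ∑ᵢ (k x)ⁱ / i! · R_i(x)`.
Truncated at `h` layers, starting from `F`, it gives `R_k = exp (k u_h) F` with `u_0 = 0` and
`u_{h+1} = x exp u_h` (`egf_layered`). All terms are nonnegative, so monotone convergence in
`ℝ≥0∞` gives `R_k = exp (k t) F`, where `t = lim u_h` satisfies `t = x exp t`
(`egf_layered_limit`). Summing over cores turns `xᵏ exp (k t)` into `tᵏ`.

The numbers `k (k + n)^(n - 1)` satisfy the same recursion, with base `1` at `n = 0`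
(`rootedForest_rec`), so `∑ (n + 1)^(n - 1) xⁿ / n! = exp t` and `T•(x) = x exp t = t`.

The sequence `u_h` is bounded at `ρ₀`: every forest has empty core and hence
belongs to the class, so
`F(ρ₀) < ∞`. An extension of one vertex is a forest, so for `x < ρ₀` the value `R_1(x)` is at most
`F'(x) < ∞`, the limit `t` exists at `x`, and `x = t exp (-t) ≤ 1/e`. Thus `ρ₀ ≤ 1/e`
(`radius_le`), and then `u_h ≤ 1` for all `h`.
-/

attribute [local instance] Classical.propDecidable

/-- `G` has minimum degree at least 2. -/
def MinDeg2 {V : Type} (G : SimpleGraph V) : Prop :=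
  ∀ v : V, 2 ≤ Set.ncard (G.neighborSet v)

/-- The vertex set of the 2-core of `G`. -/
def coreSet {V : Type} (G : SimpleGraph V) : Set V :=
  {v | ∃ W : Set V, v ∈ W ∧ ∀ u ∈ W, 2 ≤ Set.ncard {w | w ∈ W ∧ G.Adj u w}}

/-- `𝒢` is trimmable: a graph is in `𝒢` iff its 2-core is. -/
def Trimmable (𝒢 : ∀ ⦃V : Type⦄ [Fintype V], SimpleGraph V → Prop) : Prop :=
  ∀ (V : Type) [Fintype V] (G : SimpleGraph V), 𝒢 G ↔ 𝒢 (G.induce (coreSet G))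

/-- `𝒢` is decomposable: a graph is in `𝒢` iff each of its components is. -/
def Decomposable (𝒢 : ∀ ⦃V : Type⦄ [Fintype V], SimpleGraph V → Prop) : Prop :=
  ∀ (V : Type) [Fintype V] (G : SimpleGraph V),
    𝒢 G ↔ ∀ c : G.ConnectedComponent, 𝒢 (G.induce c.supp)

/-- The `n`-th coefficient of the EGF `T•(x) = ∑_{n≥1} n^{n-1} x^n / n!` of rooted
trees. -/
def treeCoef (n : ℕ) : ℕ := if n = 0 then 0 else n ^ (n - 1)

section Helpers

open Finset

/-! ### Attaching trees to a vertex set -/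

/-- `G` extends the vertex set `S` by the vertices of `U`: its edges lie in `S ∪ U`, none of them
inside `S`, and no nonempty `W ⊆ U` has all its vertices of degree at least 2 towards `W ∪ S`.
Equivalently, contracting `S` to one vertex creates no cycle or multiple edge. Vertices outside
`S ∪ U` are isolated, so that all extensions live on one vertex type. -/
def IsExt {V : Type} (G : SimpleGraph V) (S U : Finset V) : Prop :=
  (∀ a b, G.Adj a b → (a ∈ U ∨ b ∈ U) ∧ (a ∈ S ∨ a ∈ U)) ∧
  ∀ W : Set V, W ⊆ U → (∀ u ∈ W, ∃ a b, a ≠ b ∧ G.Adj u a ∧ G.Adj u b ∧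
    (a ∈ W ∨ a ∈ S) ∧ (b ∈ W ∨ b ∈ S)) → W = ∅

/-- The graph `K` together with an edge from each `a ∈ L` to its parent `p a ∈ S`. -/
def attachGraph {V : Type} (S L : Finset V) (p : L → S) (K : SimpleGraph V) : SimpleGraph V :=
  SimpleGraph.fromRel fun a b => K.Adj a b ∨ ∃ h : a ∈ L, (p ⟨a, h⟩ : V) = b

variable {V : Type} 

lemma attach_adj {S U L : Finset V} (hSU : Disjoint S U) (hL : L ⊆ U) (p : L → S) (K : SimpleGraph V) (a b : V) :
    (attachGraph S L p K).Adj a b ↔ K.Adj a b ∨ (∃ h : a ∈ L, (p ⟨a, h⟩ : V) = b) ∨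
      (∃ h : b ∈ L, (p ⟨b, h⟩ : V) = a) := by
  have key : ∀ a b : V, (∃ h : a ∈ L, (p ⟨a, h⟩ : V) = b) → a ≠ b := by
    rintro a b ⟨h, rfl⟩ e
    exact Finset.disjoint_left.1 hSU (p ⟨a, h⟩).2 (e ▸ hL h)
  simp only [attachGraph, SimpleGraph.fromRel_adj]
  have := key a b
  have := key b a
  have := K.adj_comm a b
  have : K.Adj a b → a ≠ b := fun h => h.ne
  grind

/-- Extensions of `S` whose first layer (the vertices of `U` adjacent to `S`) is `L` correspond to
pairs of a parent map `L → S` and an extension of `L` by `U \ L`. -/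
lemma layer_card [Fintype V] {S U L : Finset V} (hSU : Disjoint S U) (hL : L ⊆ U) :
    Set.ncard {G : SimpleGraph V | IsExt G S U ∧ ∀ u ∈ U, (u ∈ L ↔ ∃ s ∈ S, G.Adj u s)} =
      #S ^ #L * Set.ncard {G : SimpleGraph V | IsExt G L (U \ L)} := by
  have h1 : #S ^ #L = Set.ncard (Set.univ : Set (L → S)) := by
    rw [Set.ncard_univ]; simp
  have hd : ∀ x, x ∈ S → x ∉ U := fun x hx => Finset.disjoint_left.1 hSU hx
  have hL' : ∀ x, x ∈ L → x ∈ U := fun x => @hL x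
  rw [h1, ← Set.ncard_prod]
  symm
  refine Set.BijOn.ncard_eq (f := fun q => attachGraph S L q.1 q.2) ⟨?_, ?_, ?_⟩
  · rintro ⟨p, K⟩ ⟨-, hK1, hK2⟩
    have adj := attach_adj hSU hL p K
    dsimp at hK1 hK2 ⊢
    have hp : ∀ a (h : a ∈ L), (p ⟨a, h⟩ : V) ∈ S := fun a h => (p _).2
    refine ⟨⟨?_, ?_⟩, ?_⟩
    · intro a b hab
      rw [adj] at hab
      have := hK1 a b
      have := hK1 b a
      have := K.adj_comm a b
      grind
    · intro W hWU hW
      have hWU' : ∀ u ∈ W, u ∈ U := hWU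
      -- Off `L` the edges are those of `K`, so `W \ L` violates `K`'s condition unless empty.
      have e1 : W \ L = ∅ := by
        apply hK2
        · intro u hu
          have := hWU' u hu.1
          have := hu.2
          simp_all
        · intro u hu
          obtain ⟨a, b, hab, ha, hb, ha', hb'⟩ := hW u hu.1
          have hu2 : u ∉ L := hu.2
          have := hWU' u hu.1
          refine ⟨a, b, hab, ?_⟩
          rw [adj] at ha hb
          have := hK1 u a
          have := hK1 u b
          have := hK1 a u
          have := hK1 b u
          have := K.adj_comm a u
          have := K.adj_comm b u
          have e1 : (a ∈ W \ (L : Set V)) ↔ a ∈ W ∧ a ∉ L := by simp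
          have e2 : (b ∈ W \ (L : Set V)) ↔ b ∈ W ∧ b ∉ L := by simp
          rw [e1, e2]
          clear hW hK1 hK2 h1 e1 e2 adj
          grind
      have e2 : ∀ w ∈ W, w ∈ L := fun w hw => by
        by_contra h
        have : w ∈ W \ (L : Set V) := ⟨hw, h⟩
        rw [e1] at this; exact this
      -- A vertex of `W ⊆ L` sees only its parent in `W ∪ S`.
      by_contra hne
      obtain ⟨u, hu⟩ := Set.nonempty_iff_ne_empty.2 hne
      obtain ⟨a, b, hab, ha, hb, ha', hb'⟩ := hW u hu
      rw [adj] at ha hb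
      have := hK1 u a
      have := hK1 u b
      have := e2 u hu
      have := e2 a
      have := e2 b
      clear hW hK1 hK2 h1 adj e1 hWU
      grind
    · intro u hu
      constructor
      · intro h
        exact ⟨p ⟨u, h⟩, hp _ _, (adj _ _).2 (Or.inr (Or.inl ⟨h, rfl⟩))⟩
      · rintro ⟨s, hs, h⟩
        rw [adj] at h
        have := hK1 u s
        have := hK1 s u
        have := K.adj_comm u s
        grind
  · rintro ⟨p, K⟩ ⟨-, hK1, -⟩ ⟨p', K'⟩ ⟨-, hK1', -⟩ h
    dsimp at hK1 hK1' h
    have adj := attach_adj hSU hL p K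
    have adj' := attach_adj hSU hL p' K'
    have hp : ∀ a (h : a ∈ L), (p ⟨a, h⟩ : V) ∈ S := fun a h => (p _).2
    have hp' : ∀ a (h : a ∈ L), (p' ⟨a, h⟩ : V) ∈ S := fun a h => (p' _).2
    rw [← h] at adj'
    have both : ∀ a b, _ ↔ _ := fun a b => (adj a b).symm.trans (adj' a b)
    congr 1
    · ext ⟨a, ha⟩
      have := (both a (p ⟨a, ha⟩)).1 (Or.inr (Or.inl ⟨ha, rfl⟩))
      have := hK1' a (p ⟨a, ha⟩)
      have := hK1' (p ⟨a, ha⟩) a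
      have := K'.adj_comm a (p ⟨a, ha⟩)
      clear both adj adj'
      grind
    · ext a b
      have := both a b
      have := hK1 a b
      have := hK1 b a
      have := hK1' a b
      have := hK1' b a
      have := K.adj_comm a b
      have := K'.adj_comm a b
      clear both adj adj'
      grind
  · rintro G ⟨⟨hG1, hG2⟩, hGL⟩
    have hex : ∀ l : L, ∃ s : S, G.Adj l s := by
      rintro ⟨l, hl⟩
      obtain ⟨s, hs, h⟩ := (hGL l (hL hl)).1 hl
      exact ⟨⟨s, hs⟩, h⟩
    choose p hp using hex
    -- Two neighbours in `S` would make `W = {l}` a forbidden set.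
    have huniq : ∀ l ∈ L, ∀ s ∈ S, ∀ s' ∈ S, G.Adj l s → G.Adj l s' → s = s' := by
      intro l hl s hs s' hs' h h'
      by_contra hne
      have := hG2 {l} (by simpa using hL hl) (by
        rintro u rfl
        exact ⟨s, s', hne, h, h', Or.inr hs, Or.inr hs'⟩)
      simp at this
    -- An edge inside `L` would make its two ends, each with a parent, a forbidden set.
    have hind : ∀ l ∈ L, ∀ l' ∈ L, ¬ G.Adj l l' := by
      intro l hl l' hl' h
      have := hG2 {l, l'} (by
          intro x hx
          rcases hx with rfl | rfl
          · exact hL hl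
          · exact hL hl') (by
        have key : ∀ l l', l ∈ L → l' ∈ L → G.Adj l l' → ∃ a b, a ≠ b ∧ G.Adj l a ∧ G.Adj l b ∧
            (a ∈ ({l, l'} : Set V) ∨ a ∈ S) ∧ (b ∈ ({l, l'} : Set V) ∨ b ∈ S) := by
          intro l l' hl hl' h
          refine ⟨l', p ⟨l, hl⟩, ?_, h, hp ⟨l, hl⟩, by simp, Or.inr (p ⟨l, hl⟩).2⟩
          intro e
          exact hd _ (p ⟨l, hl⟩).2 (e ▸ hL hl')
        intro u hu
        rcases hu with rfl | rfl
        · exact key _ _ hl hl' h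
        · rw [Set.pair_comm]
          exact key _ _ hl' hl h.symm)
      have h2 : l ∈ ({l, l'} : Set V) := by simp
      rw [this] at h2
      exact h2
    let K : SimpleGraph V :=
      { Adj := fun a b => G.Adj a b ∧ a ∉ S ∧ b ∉ S
        symm := ⟨fun a b h => ⟨h.1.symm, h.2.2, h.2.1⟩⟩
        loopless := ⟨fun a h => G.loopless.irrefl a h.1⟩ }
    have hK : ∀ a b, K.Adj a b ↔ G.Adj a b ∧ a ∉ S ∧ b ∉ S := fun a b => Iff.rfl
    refine ⟨(p, K), ⟨Set.mem_univ _, ?_, ?_⟩, ?_⟩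
    · intro a b hab
      dsimp at hab
      rw [hK] at hab
      have := hG1 a b
      have := hG1 b a
      have := hind a
      have := G.adj_comm a b
      grind
    · intro W hWU hW
      have hWU' : ∀ w ∈ W, w ∈ U ∧ w ∉ L := fun w hw => by simpa using hWU hw
      -- Vertices of `L` with a neighbour in `W` also have one in `S`, so they can be added to `W`.
      have := hG2 (W ∪ {l | l ∈ L ∧ ∃ w ∈ W, G.Adj l w}) (by
          rintro x (hx | hx)
          · exact (hWU' x hx).1
          · exact hL hx.1) (by
        rintro u (hu | ⟨hu, w, hw, huw⟩)
        · obtain ⟨a, b, hab, ha, hb, ha', hb'⟩ := hW u hu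
          refine ⟨a, b, hab, ha.1, hb.1, Or.inl ?_, Or.inl ?_⟩
          · exact ha'.imp id fun h => ⟨h, u, hu, ha.1.symm⟩
          · exact hb'.imp id fun h => ⟨h, u, hu, hb.1.symm⟩
        · refine ⟨w, p ⟨u, hu⟩, ?_, huw, hp ⟨u, hu⟩, Or.inl (Or.inl hw), Or.inr (p ⟨u, hu⟩).2⟩
          intro e
          exact hd _ (p ⟨u, hu⟩).2 (e ▸ (hWU' w hw).1))
      exact (Set.union_empty_iff.1 this).1
    · ext a b
      dsimp only
      rw [attach_adj hSU hL, hK]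
      have h1 := hG1 a b
      have h2 := hG1 b a
      have h3 := hGL a
      have h4 := hGL b
      have h5 := huniq a
      have h6 := huniq b
      have h7 := G.adj_comm a b
      have h8 : ∀ a (h : a ∈ L), (p ⟨a, h⟩ : V) ∈ S ∧ G.Adj a (p ⟨a, h⟩) := fun a h => ⟨(p _).2, hp ⟨a, h⟩⟩
      have h9 := h8 a
      have h10 := h8 b
      clear hG1 hGL huniq h8 hG2 hind
      constructor
      · rintro (h | ⟨h, rfl⟩ | ⟨h, rfl⟩)
        · exact h.1
        · exact (h9 h).2
        · exact (h10 h).2.symm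
      · intro h
        by_cases ha : a ∈ S
        · have hb : b ∈ L := by grind
          exact Or.inr (Or.inr ⟨hb, by grind⟩)
        · by_cases hb : b ∈ S
          · have ha : a ∈ L := by grind
            exact Or.inr (Or.inl ⟨ha, by grind⟩)
          · exact Or.inl ⟨h, ha, hb⟩

/-! ### The 2-core, forests, and counting extensions -/

lemma two_le_ncard_iff [Finite V] (s : Set V) : 2 ≤ Set.ncard s ↔ ∃ a b, a ≠ b ∧ a ∈ s ∧ b ∈ s := by
  have := Set.one_lt_ncard_iff (s := s) s.toFinite
  rw [show 2 ≤ s.ncard ↔ 1 < s.ncard from Iff.rfl, this]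
  exact ⟨fun ⟨a, b, h1, h2, h3⟩ => ⟨a, b, h3, h1, h2⟩, fun ⟨a, b, h3, h1, h2⟩ => ⟨a, b, h1, h2, h3⟩⟩

lemma mem_coreSet_iff [Finite V] (G : SimpleGraph V) (v : V) : v ∈ coreSet G ↔
    ∃ W : Set V, v ∈ W ∧ ∀ u ∈ W, ∃ a b, a ≠ b ∧ (a ∈ W ∧ G.Adj u a) ∧ (b ∈ W ∧ G.Adj u b) := by
  simp only [coreSet, Set.mem_ofPred_eq, two_le_ncard_iff]

/-- The core is itself one of the sets of which it is the union. -/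
lemma coreSet_two [Finite V] (G : SimpleGraph V) {u : V} (hu : u ∈ coreSet G) :
    ∃ a b, a ≠ b ∧ (a ∈ coreSet G ∧ G.Adj u a) ∧ (b ∈ coreSet G ∧ G.Adj u b) := by
  obtain ⟨W, hv, hW⟩ := (mem_coreSet_iff G u).1 hu
  obtain ⟨a, b, hab, ha, hb⟩ := hW u hv
  exact ⟨a, b, hab, ⟨(mem_coreSet_iff G a).2 ⟨W, ha.1, hW⟩, ha.2⟩,
    ⟨(mem_coreSet_iff G b).2 ⟨W, hb.1, hW⟩, hb.2⟩⟩

lemma minDeg2_induce_iff [Finite V] (G : SimpleGraph V) (S : Set V) : MinDeg2 (G.induce S) ↔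
    ∀ u ∈ S, ∃ a b, a ≠ b ∧ (a ∈ S ∧ G.Adj u a) ∧ (b ∈ S ∧ G.Adj u b) := by
  simp only [MinDeg2, two_le_ncard_iff]
  constructor
  · intro h u hu
    obtain ⟨a, b, hab, ha, hb⟩ := h ⟨u, hu⟩
    exact ⟨a, b, fun e => hab (Subtype.ext e), ⟨a.2, ha⟩, ⟨b.2, hb⟩⟩
  · rintro h ⟨u, hu⟩
    obtain ⟨a, b, hab, ha, hb⟩ := h u hu
    exact ⟨⟨a, ha.1⟩, ⟨b, hb.1⟩, fun e => hab (congrArg Subtype.val e), ha.2, hb.2⟩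

lemma isAcyclic_iff_coreSet [Finite V] (G : SimpleGraph V) : G.IsAcyclic ↔ coreSet G = ∅ := by
  constructor
  · intro h
    by_contra hne
    obtain ⟨v, hv⟩ := Set.nonempty_iff_ne_empty.2 hne
    have hH : (G.induce (coreSet G)).IsAcyclic := h.induce _
    have : Nonempty (coreSet G) := ⟨⟨v, hv⟩⟩
    -- The end of a longest path in the core has all its neighbours on the path, and in an acyclic
    -- graph only the penultimate vertex qualifies.
    obtain ⟨x, y, p, hp, hmax⟩ :=
      SimpleGraph.Walk.exists_isPath_forall_isPath_length_le_length (G.induce (coreSet G))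
    obtain ⟨a, b, hab, ⟨ha, hya⟩, ⟨hb, hyb⟩⟩ := coreSet_two G y.2
    have key : ∀ a : coreSet G, (G.induce (coreSet G)).Adj y a → a = p.penultimate := by
      intro a hya
      refine hH.eq_penultimate_of_adj_end hp hya ?_
      by_contra hs
      have := hmax _ _ _ (hp.concat hs hya)
      simp at this
    exact hab (congrArg Subtype.val ((key ⟨a, ha⟩ hya).trans (key ⟨b, hb⟩ hyb).symm))
  · intro h v p hp
    have : v ∈ coreSet G := by
      refine ⟨{u | u ∈ p.support}, p.start_mem_support, fun u hu => ?_⟩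
      rw [← hp.ncard_neighborSet_toSubgraph_eq_two hu]
      refine Set.ncard_le_ncard (fun w hw => ?_) (Set.toFinite _)
      have hw' : p.toSubgraph.Adj u w := hw
      exact ⟨by simpa using hw'.snd_mem, hw'.adj_sub⟩
    rw [h] at this
    exact this

lemma isExt_empty_iff [Finite V] (G : SimpleGraph V) (U : Finset V) :
    IsExt G ∅ U ↔ (∀ a b, G.Adj a b → a ∈ U) ∧ G.IsAcyclic := by
  rw [isAcyclic_iff_coreSet]
  constructor
  · rintro ⟨h1, h2⟩
    have h1' : ∀ a b, G.Adj a b → a ∈ U := fun a b h => by simpa using (h1 a b h).2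
    refine ⟨h1', h2 _ ?_ ?_⟩
    · intro u hu
      obtain ⟨a, b, -, ha, -⟩ := coreSet_two G hu
      exact h1' _ _ ha.2
    · intro u hu
      obtain ⟨a, b, hab, ha, hb⟩ := coreSet_two G hu
      exact ⟨a, b, hab, ha.2, hb.2, Or.inl ha.1, Or.inl hb.1⟩
  · rintro ⟨h1, h2⟩
    refine ⟨fun a b h => ⟨Or.inl (h1 a b h), Or.inr (h1 a b h)⟩, fun W hW h => ?_⟩
    rw [← Set.subset_empty_iff, ← h2]
    intro u hu
    rw [mem_coreSet_iff]
    refine ⟨W, hu, fun u hu => ?_⟩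
    obtain ⟨a, b, hab, ha, hb, ha', hb'⟩ := h u hu
    exact ⟨a, b, hab, ⟨by simpa using ha', ha⟩, ⟨by simpa using hb', hb⟩⟩

/-- Graphs on `V` with all edges inside `S`, subject to an isomorphism-invariant property of the
graph induced on `S`, are counted by graphs on `Fin #S`. -/
lemma ncard_transport [Fintype V] (P : ∀ ⦃V : Type⦄ [Fintype V], SimpleGraph V → Prop)
    (hiso : ∀ (V W : Type) [Fintype V] [Fintype W] (G : SimpleGraph V)
      (H : SimpleGraph W), Nonempty (G ≃g H) → P G → P H) (S : Finset V) :
    Set.ncard {H : SimpleGraph V | (∀ a b, H.Adj a b → a ∈ S) ∧ P (H.induce (S : Set V))} =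
      Set.ncard {G : SimpleGraph (Fin #S) | P G} := by
  let e : Fin #S ≃ (S : Set V) := S.equivFin.symm
  let f : Fin #S ↪ V := e.toEmbedding.trans (Function.Embedding.subtype _)
  have hf : ∀ i, f i ∈ S := fun i => (e i).2
  have iso : ∀ G : SimpleGraph (Fin #S), Nonempty (G ≃g (G.map f).induce (S : Set V)) := fun G =>
    ⟨{ toEquiv := e, map_rel_iff' := by
        intro a b
        exact SimpleGraph.map_adj_apply (f := f) }⟩
  symm
  refine Set.BijOn.ncard_eq (f := fun G => G.map f) ⟨?_, ?_, ?_⟩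
  · intro G hG
    refine ⟨?_, hiso _ _ _ _ (iso G) hG⟩
    rintro a b h
    obtain ⟨i, j, -, rfl, rfl⟩ := (SimpleGraph.map_adj _ _ _ _).1 h
    exact hf i
  · intro G _ G' _ h
    exact SimpleGraph.map_injective f h
  · rintro H ⟨h1, h2⟩
    have e1 : (H.comap f).map f = H := by
      ext a b
      rw [SimpleGraph.map_adj]
      constructor
      · rintro ⟨i, j, h, rfl, rfl⟩
        exact h
      · intro h
        refine ⟨e.symm ⟨a, h1 _ _ h⟩, e.symm ⟨b, h1 _ _ h.symm⟩, ?_, ?_, ?_⟩ <;>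
          simp [f, h]
    refine ⟨H.comap f, ?_, e1⟩
    have := iso (H.comap f)
    rw [e1] at this
    exact hiso _ _ _ _ ⟨this.some.symm⟩ h2

/-- The number of forests on `n` labelled vertices. -/
noncomputable def forests (n : ℕ) : ℕ := Set.ncard {G : SimpleGraph (Fin n) | G.IsAcyclic}

lemma card_isExt_empty [Fintype V] (U : Finset V) :
    Set.ncard {G : SimpleGraph V | IsExt G ∅ U} = forests #U := by
  rw [forests, ← ncard_transport (fun V _ G => G.IsAcyclic)
    (fun V W _ _ G H h hG => (SimpleGraph.Iso.isAcyclic_iff h.some).1 hG) U]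
  congr 1
  ext G
  simp only [Set.mem_ofPred_eq, isExt_empty_iff]
  refine and_congr_right fun h1 => ⟨fun h => h.induce _, fun h => ?_⟩
  rw [isAcyclic_iff_coreSet] at h ⊢
  by_contra hne
  obtain ⟨v, hv⟩ := Set.nonempty_iff_ne_empty.2 hne
  have hU : ∀ v ∈ coreSet G, v ∈ U := fun v hv => by
    obtain ⟨a, b, -, ha, -⟩ := coreSet_two G hv
    exact h1 _ _ ha.2
  have : (⟨v, hU v hv⟩ : (U : Set V)) ∈ coreSet (G.induce (U : Set V)) := by
    rw [mem_coreSet_iff]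
    refine ⟨{x | (x : V) ∈ coreSet G}, hv, fun u hu => ?_⟩
    obtain ⟨a, b, hab, ha, hb⟩ := coreSet_two G hu
    exact ⟨⟨a, hU a ha.1⟩, ⟨b, hU b hb.1⟩, fun e => hab (congrArg Subtype.val e), ha, hb⟩
  rw [h] at this
  exact this

/-- The recursion `r(k, n) = ∑ᵢ C(n, i) kⁱ r(i, n - i)` with base `r(0, n) = f n`, iterated `h`
times starting from `r(k, n) = f n` for every `k`. Its value no longer depends on `h` once
`n ≤ h`, see `layered_eq_of_le`. -/
def layered (f : ℕ → ℕ) : ℕ → ℕ → ℕ → ℕ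
  | 0, _, n => f n
  | h + 1, k, n => ∑ p ∈ antidiagonal n, n.choose p.1 * k ^ p.1 * layered f h p.1 p.2

lemma layered_zero (f : ℕ → ℕ) (h n : ℕ) : layered f h 0 n = f n := by
  induction h generalizing n with
  | zero => rfl
  | succ h ih =>
    rw [layered, Finset.sum_eq_single (0, n)]
    · simp [ih]
    · rintro ⟨i, j⟩ hp hne
      have : i ≠ 0 := by rintro rfl; simp at hp; simp [hp] at hne
      simp [this]
    · simp

lemma layered_mono_succ (f : ℕ → ℕ) (h k n : ℕ) : layered f h k n ≤ layered f (h + 1) k n := by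
  induction h generalizing k n with
  | zero =>
    rw [layered, layered]
    refine le_trans ?_ (Finset.single_le_sum (fun _ _ => Nat.zero_le _)
      (show (0, n) ∈ antidiagonal n by simp))
    simp [layered]
  | succ h ih =>
    rw [layered, layered]
    gcongr
    exact ih _ _

/-- For `f = forests` the recursion counts extensions. An empty first layer leaves a forest on `U`;
otherwise fewer vertices remain. -/
lemma card_isExt [Fintype V] (h : ℕ) (S U : Finset V) (hSU : Disjoint S U) (hU : #U ≤ h) :
    Set.ncard {G : SimpleGraph V | IsExt G S U} = layered forests h #S #U := by
  induction h generalizing S U with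
  | zero =>
    have : U = ∅ := by simpa using hU
    subst this
    have e : {G : SimpleGraph V | IsExt G S ∅} = {G : SimpleGraph V | IsExt G ∅ ∅} := by
      ext G
      simp only [IsExt, Set.mem_ofPred_eq]
      refine and_congr (by simp) ?_
      refine forall_congr' fun W => forall_congr' fun hW => ?_
      have : W = ∅ := by simpa using hW
      simp [this]
    rw [e, card_isExt_empty]
    rfl
  | succ h ih =>
    have e : {G : SimpleGraph V | IsExt G S U} = ⋃ L ∈ (U.powerset : Set (Finset V)),
        {G : SimpleGraph V | IsExt G S U ∧ ∀ u ∈ U, (u ∈ L ↔ ∃ s ∈ S, G.Adj u s)} := by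
      ext G
      simp only [Set.mem_ofPred_eq, Set.mem_iUnion]
      constructor
      · intro hG
        exact ⟨U.filter fun u => ∃ s ∈ S, G.Adj u s, Finset.mem_coe.2 (Finset.mem_powerset.2 (Finset.filter_subset _ _)), hG, by simp +contextual⟩
      · rintro ⟨L, -, hG, -⟩
        exact hG
    have e2 : ∀ L ∈ U.powerset, Set.ncard {G : SimpleGraph V | IsExt G S U ∧
        ∀ u ∈ U, (u ∈ L ↔ ∃ s ∈ S, G.Adj u s)} = #S ^ #L * layered forests h #L (#U - #L) := by
      intro L hL
      rw [Finset.mem_powerset] at hL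
      rw [layer_card hSU hL, ← Finset.card_sdiff_of_subset hL]
      congr 1
      rcases L.eq_empty_or_nonempty with rfl | hne
      · simp [card_isExt_empty, layered_zero]
      · refine ih _ _ Finset.disjoint_sdiff ?_
        rw [Finset.card_sdiff_of_subset hL]
        have := hne.card_pos
        omega
    rw [e, Set.Finite.ncard_biUnion, finsum_mem_coe_finset, Finset.sum_congr rfl e2,
      Finset.sum_powerset_apply_card fun i => #S ^ i * layered forests h i (#U - i), layered,
      Finset.Nat.sum_antidiagonal_eq_sum_range_succ_mk]
    · refine Finset.sum_congr rfl fun i _ => ?_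
      simp [mul_assoc]
    · exact Finset.finite_toSet _
    · exact fun _ _ => Set.toFinite _
    · intro L hL L' hL' hne
      refine Set.disjoint_left.2 ?_
      rintro G ⟨-, hG⟩ ⟨-, hG'⟩
      apply hne
      ext u
      have h1 : L ⊆ U := by simpa using hL
      have h2 : L' ⊆ U := by simpa using hL'
      constructor
      · exact fun hu => (hG' u (h1 hu)).2 ((hG u (h1 hu)).1 hu)
      · exact fun hu => (hG u (h2 hu)).2 ((hG' u (h2 hu)).1 hu)

/-- An extension of a single vertex is a forest. -/
lemma layered_le_forests (n : ℕ) : layered forests n 1 n ≤ forests (n + 1) := by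
  have h := card_isExt (V := Fin (n + 1)) n {0} (univ \ {0}) Finset.disjoint_sdiff
    (by simp [Finset.card_sdiff])
  rw [show #({0} : Finset (Fin (n + 1))) = 1 by simp,
    show #(univ \ {0} : Finset (Fin (n + 1))) = n by simp [Finset.card_sdiff]] at h
  rw [← h]
  refine Set.ncard_le_ncard ?_ (Set.toFinite _)
  rintro G ⟨-, hG⟩
  simp only [Set.mem_ofPred_eq, isAcyclic_iff_coreSet]
  -- The condition on `W` forces the core into `{0}`, where no degree is at least 2.
  have h1 := hG (coreSet G \ {0}) (by intro x hx; simpa using hx.2) (by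
    intro u hu
    obtain ⟨a, b, hab, ha, hb⟩ := coreSet_two G hu.1
    refine ⟨a, b, hab, ha.2, hb.2, ?_, ?_⟩
    · by_cases h : a = 0
      · simp [h]
      · exact Or.inl ⟨ha.1, h⟩
    · by_cases h : b = 0
      · simp [h]
      · exact Or.inl ⟨hb.1, h⟩)
  by_contra hne
  obtain ⟨v, hv⟩ := Set.nonempty_iff_ne_empty.2 hne
  have h0 : ∀ v ∈ coreSet G, v = 0 := fun v hv => by
    by_contra h
    have : v ∈ coreSet G \ {0} := ⟨hv, h⟩
    rw [h1] at this
    exact this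
  obtain ⟨a, b, hab, ha, hb⟩ := coreSet_two G hv
  exact hab ((h0 a ha.1).trans (h0 b hb.1).symm)

/-! ### Decomposing the graphs of a trimmable class -/

lemma nonempty_iso_induce {G H : SimpleGraph V} {s t : Set V} (hst : s = t)
    (h : ∀ a ∈ s, ∀ b ∈ s, G.Adj a b ↔ H.Adj a b) : Nonempty (G.induce s ≃g H.induce t) := by
  subst hst
  refine ⟨⟨Equiv.refl _, ?_⟩⟩
  rintro ⟨a, ha⟩ ⟨b, hb⟩
  exact (h a ha b hb).symm

/-- A graph of the class with core `S` is the edge-disjoint union of a graph of minimum degree at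
least 2 on `S`, itself in the class, and an extension of `S`. -/
lemma card_core_eq [Fintype V] (𝒢 : ∀ ⦃V : Type⦄ [Fintype V], SimpleGraph V → Prop)
    (hiso : ∀ (V W : Type) [Fintype V] [Fintype W] (G : SimpleGraph V)
      (H : SimpleGraph W), Nonempty (G ≃g H) → 𝒢 G → 𝒢 H)
    (htrim : Trimmable 𝒢) (S : Finset V) :
    Set.ncard {G : SimpleGraph V | 𝒢 G ∧ coreSet G = S} =
      Set.ncard {G : SimpleGraph (Fin #S) | 𝒢 G ∧ MinDeg2 G} *
        Set.ncard {G : SimpleGraph V | IsExt G S (univ \ S)} := by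
  rw [← ncard_transport (fun V _ G => 𝒢 G ∧ MinDeg2 G) ?_ S, ← Set.ncard_prod]
  swap
  · rintro V W _ _ G H ⟨f⟩ ⟨h1, h2⟩
    refine ⟨hiso _ _ _ _ ⟨f⟩ h1, fun w => ?_⟩
    obtain ⟨a, b, hab, ha, hb⟩ := (two_le_ncard_iff _).1 (h2 (f.symm w))
    refine (two_le_ncard_iff _).2 ⟨f a, f b, fun e => hab (f.injective e), ?_, ?_⟩
    · have := f.map_adj_iff.2 ha
      simpa using this
    · have := f.map_adj_iff.2 hb
      simpa using this
  symm
  refine Set.BijOn.ncard_eq (f := fun q => q.1 ⊔ q.2) ⟨?_, ?_, ?_⟩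
  · rintro ⟨H, K⟩ ⟨⟨hH1, hH2, hH3⟩, hK1, hK2⟩
    dsimp at hH1 hH2 hH3 hK1 hK2 ⊢
    rw [minDeg2_induce_iff] at hH3
    have hHS : ∀ a b, H.Adj a b → a ∈ S ∧ b ∈ S := fun a b h => ⟨hH1 _ _ h, hH1 _ _ h.symm⟩
    have hcore : coreSet (H ⊔ K) = S := by
      apply Set.Subset.antisymm
      · have := hK2 (coreSet (H ⊔ K) \ S) (by intro x hx; simpa using hx.2) (by
          intro u hu
          obtain ⟨a, b, hab, ha, hb⟩ := coreSet_two _ hu.1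
          have key : ∀ a, (a ∈ coreSet (H ⊔ K) ∧ (H ⊔ K).Adj u a) → K.Adj u a ∧
              (a ∈ coreSet (H ⊔ K) \ S ∨ a ∈ S) := by
            rintro a ⟨h1, h2 | h2⟩
            · exact absurd (hHS _ _ h2).1 (by simpa using hu.2)
            · refine ⟨h2, ?_⟩
              by_cases h : a ∈ S
              · exact Or.inr h
              · exact Or.inl ⟨h1, by simpa using h⟩
          exact ⟨a, b, hab, (key a ha).1, (key b hb).1, (key a ha).2, (key b hb).2⟩)
        exact Set.sdiff_eq_empty.1 this
      · intro u hu
        refine (mem_coreSet_iff _ _).2 ⟨S, hu, fun u hu => ?_⟩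
        obtain ⟨a, b, hab, ha, hb⟩ := hH3 u hu
        exact ⟨a, b, hab, ⟨ha.1, Or.inl ha.2⟩, ⟨hb.1, Or.inl hb.2⟩⟩
    refine ⟨(htrim _ _).2 ?_, hcore⟩
    refine hiso _ _ _ _ (nonempty_iso_induce hcore.symm ?_) hH2
    intro a ha b hb
    have := hK1 a b
    simp only [SimpleGraph.sup_adj]
    simp_all
  · rintro ⟨H, K⟩ ⟨⟨hH1, -, -⟩, hK1, -⟩ ⟨H', K'⟩ ⟨⟨hH1', -, -⟩, hK1', -⟩ h
    dsimp at hH1 hK1 hH1' hK1' h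
    have both : ∀ a b, H.Adj a b ∨ K.Adj a b ↔ H'.Adj a b ∨ K'.Adj a b := fun a b => by
      rw [← SimpleGraph.sup_adj, ← SimpleGraph.sup_adj, h]
    simp only [mem_sdiff, mem_univ, true_and] at hK1 hK1'
    have e : ∀ a b, (H.Adj a b ↔ H'.Adj a b) ∧ (K.Adj a b ↔ K'.Adj a b) := fun a b => by
      have := both a b
      have := hH1 a b
      have := hH1 b a
      have := hH1' a b
      have := hH1' b a
      have := hK1 a b
      have := hK1' a b
      have := H.adj_comm a b
      have := H'.adj_comm a b
      clear both
      grind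
    congr 1
    · ext a b
      exact (e a b).1
    · ext a b
      exact (e a b).2
  · rintro G ⟨hG, hcore⟩
    let H : SimpleGraph V :=
      { Adj := fun a b => G.Adj a b ∧ a ∈ S ∧ b ∈ S
        symm := ⟨fun a b h => ⟨h.1.symm, h.2.2, h.2.1⟩⟩
        loopless := ⟨fun a h => G.loopless.irrefl a h.1⟩ }
    let K : SimpleGraph V :=
      { Adj := fun a b => G.Adj a b ∧ ¬ (a ∈ S ∧ b ∈ S)
        symm := ⟨fun a b h => ⟨h.1.symm, fun h' => h.2 ⟨h'.2, h'.1⟩⟩⟩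
        loopless := ⟨fun a h => G.loopless.irrefl a h.1⟩ }
    have hS : ∀ v, v ∈ coreSet G ↔ v ∈ S := fun v => by rw [hcore]; simp
    refine ⟨(H, K), ⟨⟨fun a b h => h.2.1, ?_, ?_⟩, fun a b h => ?_, ?_⟩, ?_⟩
    · refine hiso _ _ _ _ (nonempty_iso_induce hcore ?_) ((htrim _ _).1 hG)
      intro a ha b hb
      rw [hS] at ha hb
      exact ⟨fun h => ⟨h, ha, hb⟩, fun h => h.1⟩
    · rw [minDeg2_induce_iff]
      intro u hu
      obtain ⟨a, b, hab, ha, hb⟩ := coreSet_two G ((hS u).2 hu)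
      rw [hS] at ha hb
      exact ⟨a, b, hab, ⟨ha.1, ha.2, hu, ha.1⟩, ⟨hb.1, hb.2, hu, hb.1⟩⟩
    · have h2 : ¬ (a ∈ S ∧ b ∈ S) := h.2
      simp only [mem_sdiff, mem_univ, true_and]
      tauto
    · intro W hW hW2
      have hW' : ∀ w ∈ W, w ∉ S := fun w hw => by simpa using hW hw
      rw [← Set.subset_empty_iff]
      intro w hw
      refine absurd ((hS w).1 ?_) (hW' w hw)
      refine (mem_coreSet_iff _ _).2 ⟨W ∪ S, Or.inl hw, ?_⟩
      rintro u (hu | hu)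
      · obtain ⟨a, b, hab, ha, hb, ha', hb'⟩ := hW2 u hu
        exact ⟨a, b, hab, ⟨ha', ha.1⟩, ⟨hb', hb.1⟩⟩
      · obtain ⟨a, b, hab, ha, hb⟩ := coreSet_two G ((hS u).2 hu)
        rw [hS] at ha hb
        exact ⟨a, b, hab, ⟨Or.inr ha.1, ha.2⟩, ⟨Or.inr hb.1, hb.2⟩⟩
    · ext a b
      change (G.Adj a b ∧ a ∈ S ∧ b ∈ S) ∨ (G.Adj a b ∧ ¬ (a ∈ S ∧ b ∈ S)) ↔ G.Adj a b
      tauto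

lemma card_class (𝒢 : ∀ ⦃V : Type⦄ [Fintype V], SimpleGraph V → Prop)
    (hiso : ∀ (V W : Type) [Fintype V] [Fintype W] (G : SimpleGraph V)
      (H : SimpleGraph W), Nonempty (G ≃g H) → 𝒢 G → 𝒢 H)
    (htrim : Trimmable 𝒢) (n : ℕ) :
    Set.ncard {G : SimpleGraph (Fin n) | 𝒢 G} = ∑ p ∈ antidiagonal n,
      n.choose p.1 * Set.ncard {G : SimpleGraph (Fin p.1) | 𝒢 G ∧ MinDeg2 G} *
        layered forests p.2 p.1 p.2 := by
  have e : {G : SimpleGraph (Fin n) | 𝒢 G} =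
      ⋃ S ∈ ((univ : Finset (Fin n)).powerset : Set (Finset (Fin n))),
        {G : SimpleGraph (Fin n) | 𝒢 G ∧ coreSet G = S} := by
    ext G
    simp only [Set.mem_ofPred_eq, Set.mem_iUnion]
    constructor
    · intro hG
      exact ⟨univ.filter fun u => u ∈ coreSet G, by simp, hG, by simp⟩
    · rintro ⟨L, -, hG, -⟩
      exact hG
  have e2 : ∀ S ∈ (univ : Finset (Fin n)).powerset,
      Set.ncard {G : SimpleGraph (Fin n) | 𝒢 G ∧ coreSet G = S} =
        Set.ncard {G : SimpleGraph (Fin #S) | 𝒢 G ∧ MinDeg2 G} *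
          layered forests (n - #S) #S (n - #S) := by
    intro S _
    have hc : #(univ \ S) = n - #S := by
      rw [Finset.card_sdiff_of_subset (Finset.subset_univ S)]; simp
    have h2 := card_isExt (n - #S) S (univ \ S) Finset.disjoint_sdiff hc.le
    rw [hc] at h2
    rw [card_core_eq 𝒢 hiso htrim, ← h2]
    congr!
  rw [e, Set.Finite.ncard_biUnion, finsum_mem_coe_finset, Finset.sum_congr rfl e2,
    Finset.sum_powerset_apply_card fun i =>
      Set.ncard {G : SimpleGraph (Fin i) | 𝒢 G ∧ MinDeg2 G} * layered forests (n - i) i (n - i),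
    Finset.Nat.sum_antidiagonal_eq_sum_range_succ_mk]
  · simp [mul_assoc]
  · exact Finset.finite_toSet _
  · exact fun _ _ => Set.toFinite _
  · intro S _ S' _ hne
    refine Set.disjoint_left.2 ?_
    rintro G ⟨-, hG⟩ ⟨-, hG'⟩
    exact hne (Finset.coe_injective (hG.symm.trans hG'))

/-- The graphs with empty core, that is the forests, all belong to the class. -/
lemma forests_le_card_class (𝒢 : ∀ ⦃V : Type⦄ [Fintype V], SimpleGraph V → Prop)
    (hiso : ∀ (V W : Type) [Fintype V] [Fintype W] (G : SimpleGraph V)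
      (H : SimpleGraph W), Nonempty (G ≃g H) → 𝒢 G → 𝒢 H)
    (htrim : Trimmable 𝒢) 
    (hnull : 𝒢 (⊥ : SimpleGraph (Fin 0))) (n : ℕ) :
    forests n ≤ Set.ncard {G : SimpleGraph (Fin n) | 𝒢 G} := by
  rw [card_class 𝒢 hiso htrim n]
  refine le_trans ?_ (Finset.single_le_sum (fun _ _ => Nat.zero_le _)
      (show (0, n) ∈ antidiagonal n by simp))
  have : 0 < Set.ncard {G : SimpleGraph (Fin 0) | 𝒢 G ∧ MinDeg2 G} := by
    rw [Set.ncard_pos]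
    exact ⟨⊥, hnull, fun v => v.elim0⟩
  simp only [Nat.choose_zero_right, one_mul, layered_zero]
  exact Nat.le_mul_of_pos_left _ this

/-! ### Generating functions of layered counts -/

/-- The exponential generating function of `a` at `x`, as a sum in `ℝ≥0∞`; for `0 ≤ x` it is
infinite exactly when the real series diverges. -/
noncomputable def egf (a : ℕ → ℕ) (x : ℝ) : ENNReal :=
  ∑' n, ENNReal.ofReal ((a n : ℝ) * x ^ n / n.factorial)

/-- If the `k`-th member of a family has generating function `exp (k u) F`, weighting the family by
`b` amounts to evaluating the generating function of `b` at `x exp u`. -/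
lemma egf_convolution (b : ℕ → ℕ) (r : ℕ → ℕ → ℕ) (c : ℕ → ℕ)
    (hc : ∀ n, c n = ∑ p ∈ antidiagonal n, n.choose p.1 * b p.1 * r p.1 p.2) {x u : ℝ}
    (hx : 0 ≤ x) (F : ENNReal)
    (hr : ∀ k, egf (r k) x = ENNReal.ofReal (Real.exp (k * u)) * F) :
    egf c x = egf b (x * Real.exp u) * F := by
  have h1 : ∀ n, ENNReal.ofReal ((c n : ℝ) * x ^ n / n.factorial) = ∑ p ∈ antidiagonal n,
      ENNReal.ofReal ((b p.1 : ℝ) * x ^ p.1 / p.1.factorial) *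
        ENNReal.ofReal ((r p.1 p.2 : ℝ) * x ^ p.2 / p.2.factorial) := by
    intro n
    rw [hc, Nat.cast_sum, Finset.sum_mul, Finset.sum_div, ENNReal.ofReal_sum_of_nonneg]
    · refine Finset.sum_congr rfl fun p hp => ?_
      rw [← ENNReal.ofReal_mul (by positivity)]
      congr 1
      rw [HasAntidiagonal.mem_antidiagonal] at hp
      have h2 : (n.choose p.1 : ℝ) * p.1.factorial * p.2.factorial = n.factorial := by
        rw [← hp]
        rw [Nat.choose_symm_add]
        exact_mod_cast Nat.add_choose_mul_factorial_mul_factorial p.1 p.2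
      have h3 : (n.factorial : ℝ) ≠ 0 := by positivity
      have h4 : (p.1.factorial : ℝ) ≠ 0 := by positivity
      have h5 : (p.2.factorial : ℝ) ≠ 0 := by positivity
      have h6 : x ^ n = x ^ p.1 * x ^ p.2 := by rw [← pow_add, hp]
      rw [h6, div_mul_div_comm, div_eq_div_iff h3 (by positivity), ← h2]
      push_cast
      ring
    · intro p _
      positivity
  simp only [egf, h1] at hr ⊢
  have h2 : ∑' n, ∑ p ∈ antidiagonal n,
      ENNReal.ofReal ((b p.1 : ℝ) * x ^ p.1 / p.1.factorial) *
        ENNReal.ofReal ((r p.1 p.2 : ℝ) * x ^ p.2 / p.2.factorial) =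
      ∑' k, ∑' m, ENNReal.ofReal ((b k : ℝ) * x ^ k / k.factorial) *
        ENNReal.ofReal ((r k m : ℝ) * x ^ m / m.factorial) := by
    rw [← ENNReal.tsum_prod, ← Finset.HasAntidiagonal.sigmaAntidiagonalEquivProd.tsum_eq,
      ENNReal.tsum_sigma']
    refine tsum_congr fun n => ?_
    rw [tsum_fintype, ← Finset.sum_coe_sort]
    rfl
  rw [h2, ← ENNReal.tsum_mul_right]
  refine tsum_congr fun k => ?_
  rw [ENNReal.tsum_mul_left, hr, ← mul_assoc, ← ENNReal.ofReal_mul (by positivity), mul_pow,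
    ← Real.exp_nat_mul]
  congr 2
  ring

lemma egf_pow (k : ℕ) {y : ℝ} (hy : 0 ≤ y) :
    egf (fun i => k ^ i) y = ENNReal.ofReal (Real.exp (k * y)) := by
  have h := NormedSpace.expSeries_div_hasSum_exp (k * y : ℝ)
  rw [← Real.exp_eq_exp_ℝ] at h
  rw [← h.tsum_eq, ENNReal.ofReal_tsum_of_nonneg _ h.summable, egf]
  · simp [mul_pow]
  · intro n
    positivity

/-- The generating function at `x` of rooted labelled trees with at most `h` levels, defined by
its recursion `u_{h+1} = x exp u_h`. -/
noncomputable def height (x : ℝ) : ℕ → ℝ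
  | 0 => 0
  | h + 1 => x * Real.exp (height x h)

lemma height_nonneg {x : ℝ} (hx : 0 ≤ x) : ∀ h, 0 ≤ height x h
  | 0 => le_rfl
  | h + 1 => by rw [height]; positivity

lemma height_mono {x : ℝ} (hx : 0 ≤ x) : Monotone (height x) := by
  refine monotone_nat_of_le_succ fun h => ?_
  induction h with
  | zero => exact height_nonneg hx 1
  | succ h ih =>
    rw [height, height]
    gcongr

lemma egf_layered (f : ℕ → ℕ) {x : ℝ} (hx : 0 ≤ x) (h k : ℕ) :
    egf (layered f h k) x = ENNReal.ofReal (Real.exp (k * height x h)) * egf f x := by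
  induction h generalizing k with
  | zero => simp [height, layered, egf]
  | succ h ih =>
    rw [egf_convolution (fun i => k ^ i) (fun i => layered f h i)
      (layered f (h + 1) k) (fun n => rfl) hx (egf f x) ih,
      egf_pow _ (by positivity), height]

lemma egf_mono {a b : ℕ → ℕ} (h : ∀ n, a n ≤ b n) {x : ℝ} (hx : 0 ≤ x) : egf a x ≤ egf b x := by
  refine ENNReal.tsum_le_tsum fun n => ENNReal.ofReal_le_ofReal ?_
  have : (a n : ℝ) ≤ b n := by exact_mod_cast h n
  gcongr

lemma layered_succ_of_le (f : ℕ → ℕ) {h n : ℕ} (k : ℕ) (hn : n ≤ h) :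
    layered f (h + 1) k n = layered f h k n := by
  induction h generalizing k n with
  | zero =>
    obtain rfl : n = 0 := by omega
    simp [layered]
  | succ h ih =>
    rw [layered, layered]
    refine Finset.sum_congr rfl fun p hp => ?_
    rw [HasAntidiagonal.mem_antidiagonal] at hp
    rcases Nat.eq_zero_or_pos p.1 with h0 | h0
    · simp [h0, layered_zero]
    · rw [ih _ (by omega)]

lemma layered_eq_of_le (f : ℕ → ℕ) {h n : ℕ} (k : ℕ) (hn : n ≤ h) :
    layered f h k n = layered f n k n := by
  induction h, hn using Nat.le_induction with
  | base => rfl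
  | succ h hn ih => rw [layered_succ_of_le f k hn, ih]

lemma layered_le (f : ℕ → ℕ) (h k n : ℕ) : layered f h k n ≤ layered f n k n := by
  rcases le_total n h with hn | hn
  · exact (layered_eq_of_le f k hn).le
  · exact monotone_nat_of_le_succ (f := fun h => layered f h k n)
      (fun h => layered_mono_succ f h k n) hn

/-- The generating function of the full recursion is the limit of those of its truncations, by
monotone convergence. -/
lemma egf_layered_limit (f : ℕ → ℕ) {x t : ℝ} (hx : 0 ≤ x)
    (ht : Filter.Tendsto (height x) Filter.atTop (nhds t)) (k : ℕ) :
    egf (fun n => layered f n k n) x = ENNReal.ofReal (Real.exp (k * t)) * egf f x := by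
  have h1 : Filter.Tendsto (fun h => egf (layered f h k) x) Filter.atTop
      (nhds (ENNReal.ofReal (Real.exp (k * t)) * egf f x)) := by
    simp only [egf_layered f hx]
    refine ENNReal.Tendsto.mul_const (ENNReal.tendsto_ofReal ?_)
      (Or.inl (by simpa using Real.exp_pos _))
    exact (Real.continuous_exp.tendsto _).comp (ht.const_mul _)
  refine le_antisymm ?_ (le_of_tendsto' h1 fun h => egf_mono (layered_le f h k) hx)
  have hm : Monotone fun h => egf (layered f h k) x :=
    monotone_nat_of_le_succ fun h => egf_mono (layered_mono_succ f h k) hx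
  rw [egf, ENNReal.tsum_eq_iSup_nat]
  refine iSup_le fun N => le_trans ?_ (hm.ge_of_tendsto h1 N)
  refine le_trans (le_of_eq ?_) (ENNReal.sum_le_tsum (Finset.range N))
  refine Finset.sum_congr rfl fun n hn => ?_
  rw [layered_eq_of_le f k (Finset.mem_range.1 hn).le]

lemma height_limit {x C : ℝ} (hx : 0 ≤ x) (hC : ∀ h, height x h ≤ C) :
    ∃ t, Filter.Tendsto (height x) Filter.atTop (nhds t) ∧ t = x * Real.exp t ∧ t ≤ C := by
  have h1 := tendsto_atTop_ciSup (height_mono hx) ⟨C, by rintro _ ⟨h, rfl⟩; exact hC h⟩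
  refine ⟨_, h1, ?_, ciSup_le hC⟩
  refine tendsto_nhds_unique ((Filter.tendsto_add_atTop_iff_nat 1).2 h1) ?_
  exact ((Real.continuous_exp.tendsto _).comp h1).const_mul x

lemma le_exp_neg_one_of_eq {x t : ℝ} (h : t = x * Real.exp t) : x ≤ Real.exp (-1) := by
  have h1 : x * Real.exp t ≤ Real.exp (t - 1) := by
    have := Real.add_one_le_exp (t - 1)
    linarith
  have h2 : Real.exp (t - 1) = Real.exp (-1) * Real.exp t := by rw [← Real.exp_add]; ring_nf
  rw [h2] at h1
  exact le_of_mul_le_mul_right h1 (Real.exp_pos t)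

lemma height_le_one {x : ℝ} (hx : 0 ≤ x) (hx1 : x ≤ Real.exp (-1)) (h : ℕ) : height x h ≤ 1 := by
  induction h with
  | zero => simp [height]
  | succ h ih =>
    rw [height]
    calc x * Real.exp (height x h) ≤ Real.exp (-1) * Real.exp 1 := by gcongr
      _ = 1 := by rw [← Real.exp_add]; simp

/-- The number `k (k + n)^(n - 1)` of forests on `k + n` labelled vertices rooted at `k` given
vertices; the value at `n = 0` is `1`, also for `k = 0`. -/
def rootedForest (k n : ℕ) : ℕ := if n = 0 then 1 else k * (k + n) ^ (n - 1)

/-- By absorption, `(i + 1) C(n + 1, i + 1) = (n + 1) C(n, i)`, the sum is `k` times the binomial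
expansion of `(k + (n + 1))^n`. -/
lemma rootedForest_rec (k n : ℕ) : rootedForest k n =
    ∑ p ∈ antidiagonal n, n.choose p.1 * k ^ p.1 * rootedForest p.1 p.2 := by
  rcases n with _ | n
  · simp [rootedForest]
  have h1 : ∀ p ∈ antidiagonal n, (n + 1).choose (p.1 + 1) * k ^ (p.1 + 1) *
      rootedForest (p.1 + 1) p.2 = k * (n.choose p.1 * (k ^ p.1 * (n + 1) ^ p.2)) := by
    rintro ⟨i, j⟩ hp
    rw [HasAntidiagonal.mem_antidiagonal] at hp
    dsimp only at hp ⊢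
    rcases j with _ | j
    · obtain rfl : i = n := by omega
      simp [rootedForest]
      ring
    · have h2 : i + 1 + (j + 1) = n + 1 := by omega
      have h3 := Nat.add_one_mul_choose_eq n i
      simp only [rootedForest, h2]
      simp only [Nat.add_eq_zero_iff, one_ne_zero, and_false, if_false, Nat.add_sub_cancel]
      calc _ = (n + 1).choose (i + 1) * (i + 1) * (k ^ (i + 1) * (n + 1) ^ j) := by ring
        _ = _ := by rw [← h3]; ring
  rw [Finset.Nat.sum_antidiagonal_succ, Finset.sum_congr rfl h1, ← Finset.mul_sum]
  have h4 := Commute.add_pow' (Commute.all k (n + 1)) n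
  simp only [smul_eq_mul] at h4
  rw [← h4]
  simp [rootedForest]

lemma layered_rootedForest (h k n : ℕ) (hn : n ≤ h) :
    layered (fun n => if n = 0 then 1 else 0) h k n = rootedForest k n := by
  induction h generalizing k n with
  | zero =>
    obtain rfl : n = 0 := by omega
    simp [layered, rootedForest]
  | succ h ih =>
    rw [layered, rootedForest_rec]
    refine Finset.sum_congr rfl fun p hp => ?_
    rw [HasAntidiagonal.mem_antidiagonal] at hp
    rcases Nat.eq_zero_or_pos p.1 with h0 | h0
    · simp [h0, layered_zero, rootedForest]
    · rw [ih _ _ (by omega)]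

/-! ### The tree function and the radius of convergence -/

lemma summable_of_egf {a : ℕ → ℕ} {x : ℝ} (hx : 0 ≤ x) (h : egf a x ≠ ⊤) :
    Summable fun n : ℕ => (a n : ℝ) * x ^ n / (n.factorial : ℝ) := by
  refine (ENNReal.summable_toReal h).congr fun n => ?_
  rw [ENNReal.toReal_ofReal (by positivity)]

lemma toReal_egf (a : ℕ → ℕ) {x : ℝ} (hx : 0 ≤ x) :
    (egf a x).toReal = ∑' n : ℕ, (a n : ℝ) * x ^ n / (n.factorial : ℝ) := by
  rw [egf, ENNReal.tsum_toReal_eq (fun _ => ENNReal.ofReal_ne_top)]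
  refine tsum_congr fun n => ?_
  rw [ENNReal.toReal_ofReal (by positivity)]

/-- `T•(x) = x ∑ (n + 1)^(n - 1) xⁿ / n! = x exp t = t`. -/
lemma tsum_treeCoef {x t : ℝ} (hx : 0 ≤ x)
    (ht : Filter.Tendsto (height x) Filter.atTop (nhds t)) (hfix : t = x * Real.exp t) :
    ∑' n : ℕ, (treeCoef n : ℝ) * x ^ n / (n.factorial : ℝ) = t := by
  have h1 := egf_layered_limit (fun n => if n = 0 then 1 else 0) hx ht 1
  have h2 : egf (fun n => if n = 0 then 1 else 0) x = 1 := by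
    rw [egf, tsum_eq_single 0]
    · simp
    · intro n hn
      simp [hn]
  rw [h2, mul_one] at h1
  simp only [layered_rootedForest _ _ _ le_rfl, Nat.cast_one, one_mul] at h1
  have h3 : ∑' n : ℕ, (rootedForest 1 n : ℝ) * x ^ n / (n.factorial : ℝ) = Real.exp t := by
    rw [← toReal_egf _ hx, h1, ENNReal.toReal_ofReal (Real.exp_pos t).le]
  have h4 := (summable_of_egf hx (h1 ▸ ENNReal.ofReal_ne_top)).mul_left x
  have h5 : ∀ n : ℕ, (treeCoef (n + 1) : ℝ) * x ^ (n + 1) / ((n + 1).factorial : ℝ) =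
      x * ((rootedForest 1 n : ℝ) * x ^ n / (n.factorial : ℝ)) := by
    intro n
    have h6 : (treeCoef (n + 1) : ℝ) = (n + 1) * rootedForest 1 n := by
      rcases n with _ | n
      · simp [treeCoef, rootedForest]
      · simp only [treeCoef, rootedForest]
        simp only [Nat.add_eq_zero_iff, one_ne_zero, and_false, if_false, Nat.add_sub_cancel]
        push_cast
        ring
    have h7 : (n.factorial : ℝ) ≠ 0 := by positivity
    have h8 : ((n : ℝ) + 1) ≠ 0 := by positivity
    rw [h6, Nat.factorial_succ]
    push_cast
    field_simp
    ring
  rw [Summable.tsum_eq_zero_add ((summable_nat_add_iff 1).1 (h4.congr fun n => (h5 n).symm)),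
    tsum_congr h5, tsum_mul_left, h3]
  simpa [treeCoef] using hfix.symm

/-- The formal derivative of a generating function converges strictly inside its domain. -/
lemma egf_shift_ne_top {a : ℕ → ℕ} {x ρ : ℝ} (hx : 0 ≤ x) (hxρ : x < ρ) (h : egf a ρ ≠ ⊤) :
    egf (fun n => a (n + 1)) x ≠ ⊤ := by
  have hρ : 0 < ρ := hx.trans_lt hxρ
  have h1 := (summable_nat_add_iff 1).2 (summable_of_egf hρ.le h)
  have h2 : Filter.Tendsto (fun n : ℕ => (n : ℝ) * (x / ρ) ^ n) Filter.atTop (nhds 0) :=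
    tendsto_self_mul_const_pow_of_lt_one (by positivity) ((div_lt_one hρ).2 hxρ)
  obtain ⟨C, hC⟩ := h2.bddAbove_range
  refine Summable.tsum_ofReal_ne_top (Summable.of_nonneg_of_le (fun n => by positivity) ?_
    (h1.mul_left ((C + 1) / ρ)))
  intro n
  have h3 : (n : ℝ) * (x / ρ) ^ n ≤ C := hC ⟨n, rfl⟩
  have h4 : (x / ρ) ^ n ≤ 1 := pow_le_one₀ (by positivity) ((div_le_one hρ).2 hxρ.le)
  have h5 : (n + 1) * x ^ n ≤ (C + 1) * ρ ^ n := by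
    have e : x ^ n = (x / ρ) ^ n * ρ ^ n := by rw [← mul_pow, div_mul_cancel₀ _ hρ.ne']
    rw [e, ← mul_assoc]
    gcongr
    linarith
  have h7 : (n.factorial : ℝ) ≠ 0 := by positivity
  have h8 : ((n : ℝ) + 1) ≠ 0 := by positivity
  calc (a (n + 1) : ℝ) * x ^ n / n.factorial
      = (a (n + 1) : ℝ) / (n + 1).factorial * ((n + 1) * x ^ n) := by
        rw [Nat.factorial_succ]; push_cast; field_simp
    _ ≤ (a (n + 1) : ℝ) / (n + 1).factorial * ((C + 1) * ρ ^ n) := by gcongr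
    _ = _ := by rw [pow_succ]; field_simp

lemma one_le_egf_forests {x : ℝ} (hx : 0 ≤ x) : 1 ≤ egf forests x := by
  have h0 : 1 ≤ forests 0 := by
    rw [forests, Nat.one_le_iff_ne_zero, ← Nat.pos_iff_ne_zero, Set.ncard_pos]
    exact ⟨⊥, SimpleGraph.isAcyclic_bot⟩
  refine le_trans ?_ (ENNReal.le_tsum 0)
  rw [ENNReal.one_le_ofReal]
  simpa using h0

/-- For `x < ρ`, the bound `exp (u_h) ≤ R_1(x) ≤ F'(x) < ∞` makes `u_h` converge to a solution of
`t = x exp t`, which exists only for `x ≤ 1/e`. -/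
lemma radius_le {ρ : ℝ} (hρ : 0 < ρ) (h : egf forests ρ ≠ ⊤) : ρ ≤ Real.exp (-1) := by
  refine le_of_forall_lt_imp_le_of_dense fun x hxρ => ?_
  rcases le_total x 0 with hx | hx
  · exact hx.trans (Real.exp_pos _).le
  have h1 := egf_shift_ne_top hx hxρ h
  obtain ⟨t, -, ht, -⟩ := height_limit (C := (egf (fun n => forests (n + 1)) x).toReal) hx (by
    intro k
    have h2 : ENNReal.ofReal (Real.exp (height x k)) ≤ egf (fun n => forests (n + 1)) x := by
      calc ENNReal.ofReal (Real.exp (height x k))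
          ≤ ENNReal.ofReal (Real.exp ((1 : ℕ) * height x k)) * egf forests x := by
            rw [Nat.cast_one, one_mul]
            exact le_mul_of_one_le_right' (one_le_egf_forests hx)
        _ = egf (layered forests k 1) x := (egf_layered _ hx _ _).symm
        _ ≤ _ := egf_mono (fun n => (layered_le _ _ _ _).trans (layered_le_forests n)) hx
    rw [ENNReal.ofReal_le_iff_le_toReal h1] at h2
    have := Real.add_one_le_exp (height x k)
    linarith)
  exact le_exp_neg_one_of_eq ht

end Helpers

/-- Let `𝒢` be a decomposable, trimmable class (closed under
isomorphism, containing the null graph) with `𝒢^{δ≥2}` containing a non-null graph,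
let `ρ₀ > 0` satisfy `G(ρ₀) < ∞`, and let `ρ₂ = T•(ρ₀)`.  Then `ρ₂ e^{-ρ₂} = ρ₀`
(with `0 < ρ₂ < 1` when `ρ₀ < 1/e`), `G^{δ≥2}(ρ₂) < ∞`, and
`G(ρ₀) = G^{δ≥2}(ρ₂) · F(ρ₀)` where `F` is the EGF of forests. -/
theorem stmt_18 (𝒢 : ∀ ⦃V : Type⦄ [Fintype V], SimpleGraph V → Prop)
    (hiso : ∀ (V W : Type) [Fintype V] [Fintype W] (G : SimpleGraph V)
      (H : SimpleGraph W), Nonempty (G ≃g H) → 𝒢 G → 𝒢 H)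
    (hdec : Decomposable 𝒢) (htrim : Trimmable 𝒢)
    (hnull : 𝒢 (⊥ : SimpleGraph (Fin 0)))
    (hne : ∃ (n : ℕ) (G : SimpleGraph (Fin n)), 0 < n ∧ 𝒢 G ∧ MinDeg2 G)
    (ρ₀ : ℝ) (h0 : 0 < ρ₀)
    (hsum : Summable (fun n : ℕ =>
      (Set.ncard {G : SimpleGraph (Fin n) | 𝒢 G} : ℝ) * ρ₀ ^ n / (Nat.factorial n : ℝ)))
    (ρ₂ : ℝ)
    (hρ₂ : ρ₂ = ∑' n : ℕ, (treeCoef n : ℝ) * ρ₀ ^ n / (Nat.factorial n : ℝ)) :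
    ρ₂ * Real.exp (-ρ₂) = ρ₀ ∧
    (ρ₀ < Real.exp (-1) → 0 < ρ₂ ∧ ρ₂ < 1) ∧
    Summable (fun n : ℕ =>
      (Set.ncard {G : SimpleGraph (Fin n) | 𝒢 G ∧ MinDeg2 G} : ℝ) * ρ₂ ^ n /
        (Nat.factorial n : ℝ)) ∧
    (∑' n : ℕ, (Set.ncard {G : SimpleGraph (Fin n) | 𝒢 G} : ℝ) * ρ₀ ^ n /
        (Nat.factorial n : ℝ)) =
      (∑' n : ℕ, (Set.ncard {G : SimpleGraph (Fin n) | 𝒢 G ∧ MinDeg2 G} : ℝ) * ρ₂ ^ n /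
          (Nat.factorial n : ℝ)) *
      (∑' n : ℕ, (Set.ncard {G : SimpleGraph (Fin n) | G.IsAcyclic} : ℝ) * ρ₀ ^ n /
          (Nat.factorial n : ℝ)) := by
  have hclass := card_class 𝒢 hiso htrim
  have hG : egf (fun n => Set.ncard {G : SimpleGraph (Fin n) | 𝒢 G}) ρ₀ ≠ ⊤ :=
    hsum.tsum_ofReal_ne_top
  have hF : egf forests ρ₀ ≠ ⊤ :=
    ne_top_of_le_ne_top hG (egf_mono (forests_le_card_class 𝒢 hiso htrim hnull) h0.le)
  have hρ := radius_le h0 hF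
  obtain ⟨t, ht, hfix, ht1⟩ := height_limit h0.le (height_le_one h0.le hρ)
  rw [tsum_treeCoef h0.le ht hfix] at hρ₂
  subst hρ₂
  have hpos : 0 < ρ₂ := by rw [hfix]; positivity
  have hinv : ρ₂ * Real.exp (-ρ₂) = ρ₀ := by
    nth_rewrite 1 [hfix]
    rw [mul_assoc, ← Real.exp_add]
    simp
  have hmain := egf_convolution (fun n => Set.ncard {G : SimpleGraph (Fin n) | 𝒢 G ∧ MinDeg2 G})
    (fun k n => layered forests n k n) _ hclass h0.le (egf forests ρ₀)
    (egf_layered_limit forests h0.le ht)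
  rw [← hfix] at hmain
  have hcore : egf (fun n => Set.ncard {G : SimpleGraph (Fin n) | 𝒢 G ∧ MinDeg2 G}) ρ₂ ≠ ⊤ := by
    refine ne_top_of_le_ne_top hG ?_
    rw [hmain]
    exact le_mul_of_one_le_right' (one_le_egf_forests h0.le)
  refine ⟨hinv, fun hlt => ⟨hpos, lt_of_le_of_ne ht1 ?_⟩, summable_of_egf hpos.le hcore, ?_⟩
  · rintro rfl
    rw [one_mul] at hinv
    exact hlt.ne hinv.symm
  · have := congrArg ENNReal.toReal hmain
    rwa [ENNReal.toReal_mul, toReal_egf _ h0.le, toReal_egf _ hpos.le, toReal_egf _ h0.le] at this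
end

section
/- Let G be a decomposable trimmable graph class, ρ_0 > 0 with G(ρ_0) < ∞, ρ_2 = T•(ρ_0), and let H be a connected graph of minimum degree at least 2 in G. Let H̃ be the set of unlabelled connected graphs in G whose 2-core is isomorphic to H. Then ∑_{G ∈ H̃} ρ_0^{v(G)}/aut(G) = ρ_2^{v(H)}/aut(H). -/
attribute [local instance] Classical.propDecidable

/-!
A connected graph whose 2-core is a copy of `H` is that copy together with a forest hanging off it,
and the forest is the same thing as a parent function on the vertices outside the core. Fix an
injection `f` of the `h` vertices of `H` into `Fin n`. The connected graphs whose core is the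
`f`-image of `H` then correspond to the acyclic parent functions `M → R ⊕ M` with `|R| = h` roots
and `|M| = n - h` further vertices (`attach_coreSet`, `attach_injective`, `attach_surjective`).
With `m = n - h`, Cayley's formula for rooted forests gives their number, `h (m + h) ^ (m - 1)`
(`card_isForestMap`), by induction on `m`: the vertices whose parent is a root form a subset `J`,
which serves as the root set for the remaining vertices.

Counting pairs (graph, marking of its core by `H`) in two ways gives
`L n * aut H = n (n - 1) ⋯ (n - h + 1) * h (m + h) ^ (m - 1)`, where `L n` is the number of labelled
graphs in question (`ncard_mul_card_aut`). All of these lie in `𝒢`, since `𝒢` is trimmable.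
Abel's identity says that the exponential generating function of rooted forests with `h` roots, not
counting the roots, is the `h`-th power of that with one root (`tsum_forestCount`), and
`T•(x) = x * ∑ m, (m + 1) ^ (m - 1) x ^ m / m!`; the theorem follows.

Convergence of `T•(ρ₀)` comes from the graphs counted on the left: they form a subfamily of `𝒢`, so
the left side converges, and it dominates a positive multiple of the series for `T•(ρ₀)`.
-/

/-! ### Abel's identity and the generating function of rooted forests -/

/-- The number `k (m + k) ^ (m - 1)` of forests on `m + k` labelled vertices rooted at `k` prescribed
vertices. For `m = 0` the value is `1`, also when `k = 0`. -/
def forestCount (k m : ℕ) : ℕ := if m = 0 then 1 else k * (m + k) ^ (m - 1)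

/-- Classifying rooted forests by the set of children of the roots, of size `j`. After
multiplication by `s + 1` this is the binomial expansion of `(k + (s + 1)) ^ s`. -/
lemma forestCount_recursion (k s : ℕ) :
    ∑ j ∈ Finset.range (s + 2), (s + 1).choose j * (k ^ j * forestCount j (s + 1 - j)) =
      forestCount k (s + 1) := by
  rw [Finset.sum_range_succ']
  have h0 : forestCount 0 (s + 1 - 0) = 0 := by simp [forestCount]
  rw [h0, mul_zero, mul_zero, add_zero]
  apply Nat.eq_of_mul_eq_mul_left (Nat.succ_pos s)
  have e : forestCount k (s + 1) = k * (k + (s + 1)) ^ s := by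
    simp [forestCount, add_comm]
  rw [e, add_pow, Finset.mul_sum, Finset.mul_sum, Finset.mul_sum]
  refine Finset.sum_congr rfl fun i hi => ?_
  have hi' : i ≤ s := by simpa [Nat.lt_succ_iff] using hi
  have e2 : forestCount (i + 1) (s + 1 - (i + 1)) * (s + 1) = (i + 1) * (s + 1) ^ (s - i) := by
    rcases Nat.eq_or_lt_of_le hi' with rfl | hlt
    · simp [forestCount]
    · obtain ⟨t, rfl⟩ := Nat.exists_eq_add_of_lt hlt
      have : i + t + 1 + 1 - (i + 1) = t + 1 := by omega
      have h2 : i + t + 1 - i = t + 1 := by omega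
      rw [this, h2]
      simp only [forestCount, Nat.add_eq_zero_iff, one_ne_zero, and_false, if_false]
      have : t + 1 + (i + 1) = i + t + 1 + 1 := by ring
      rw [this, Nat.add_sub_cancel, pow_succ]; ring
  have e3 : (s + 1).choose (i + 1) * (i + 1) = (s + 1) * s.choose i :=
    (Nat.add_one_mul_choose_eq s i).symm
  calc (s + 1) * ((s + 1).choose (i + 1) * (k ^ (i + 1) * forestCount (i + 1) (s + 1 - (i + 1))))
      = (s + 1).choose (i + 1) * k ^ (i + 1) *
        (forestCount (i + 1) (s + 1 - (i + 1)) * (s + 1)) := by ring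
    _ = (s + 1).choose (i + 1) * (i + 1) * k ^ (i + 1) * (s + 1) ^ (s - i) := by rw [e2]; ring
    _ = _ := by rw [e3]; simp only [Nat.succ_eq_add_one, Nat.cast_id]; ring

open Polynomial in
/-- The Abel polynomial `X (X + m) ^ (m - 1)`, with value `1` for `m = 0`. -/
noncomputable def abelPoly (m : ℕ) : ℝ[X] := if m = 0 then 1 else X * (X + C (m : ℝ)) ^ (m - 1)

open Polynomial in
lemma derivative_abelPoly (m : ℕ) :
    derivative (abelPoly (m + 1)) = C ((m : ℝ) + 1) * (abelPoly m).comp (X + C 1) := by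
  rcases m with _ | m
  · simp [abelPoly]
  · simp only [abelPoly, Nat.add_eq_zero_iff, one_ne_zero, and_false, if_false,
      Nat.add_sub_cancel, derivative_mul, derivative_X, derivative_pow, derivative_add,
      derivative_C, mul_comp, X_comp, pow_comp, add_comp, C_comp]
    push_cast
    simp only [C_add, C_1, map_natCast]
    ring

open Polynomial in
/-- Abel's identity: the Abel polynomials are of binomial type. By induction on `m`, both sides
have the same derivative, and they agree at `0` because `abelPoly m` vanishes there for `m ≥ 1`. -/
lemma abelPoly_add (m : ℕ) (y : ℝ) :
    ∑ ij ∈ Finset.HasAntidiagonal.antidiagonal m,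
        C ((m.choose ij.1 : ℝ) * (abelPoly ij.2).eval y) * abelPoly ij.1 =
      (abelPoly m).comp (X + C y) := by
  induction m with
  | zero => simp [abelPoly]
  | succ m ih =>
    rw [← sub_eq_zero]
    set Q := ∑ ij ∈ Finset.HasAntidiagonal.antidiagonal (m + 1),
        C (((m + 1).choose ij.1 : ℝ) * (abelPoly ij.2).eval y) * abelPoly ij.1 -
        (abelPoly (m + 1)).comp (X + C y) with hQ
    have hder : derivative Q = 0 := by
      rw [hQ, derivative_sub, sub_eq_zero, derivative_sum, Finset.Nat.antidiagonal_succ,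
        Finset.sum_cons, Finset.sum_map, derivative_comp, derivative_abelPoly]
      have := congrArg (fun P : ℝ[X] => C ((m : ℝ) + 1) * P.comp (X + C 1)) ih
      simp only [Polynomial.sum_comp, Finset.mul_sum] at this
      have hone : derivative (abelPoly 0) = 0 := by simp [abelPoly]
      simp only [derivative_C_mul, hone, mul_zero, zero_add, mul_comp, C_comp]
      have e : (C ((m : ℝ) + 1) * ((abelPoly m).comp (X + C y)).comp (X + C 1)) =
          derivative (X + C y) *
            (C ((m : ℝ) + 1) * ((abelPoly m).comp (X + C 1)).comp (X + C y)) := by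
        rw [comp_assoc, comp_assoc]; simp; left; congr 1; ring
      rw [← e, ← this]
      refine Finset.sum_congr rfl fun ij _ => ?_
      change C (((m + 1).choose (ij.1 + 1) : ℝ) * (abelPoly ij.2).eval y) *
        derivative (abelPoly (ij.1 + 1)) = _
      rw [derivative_abelPoly]
      have hc : ((m + 1).choose (ij.1 + 1) : ℝ) * (ij.1 + 1) = (m + 1) * m.choose ij.1 := by
        exact_mod_cast (Nat.add_one_mul_choose_eq m ij.1).symm
      simp only [mul_comp, C_comp]
      rw [← mul_assoc, ← mul_assoc, ← C_mul, ← C_mul]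
      congr 2
      linear_combination (abelPoly ij.2).eval y * hc
    have hconst := derivative_eq_zero.1 hder
    rw [eq_C_of_natDegree_eq_zero hconst, coeff_zero_eq_eval_zero, hQ, eval_sub, eval_finsetSum,
      Finset.Nat.antidiagonal_succ, Finset.sum_cons, Finset.sum_map]
    simp [abelPoly]

lemma forestCount_eq_eval (k m : ℕ) : (forestCount k m : ℝ) = (abelPoly m).eval (k : ℝ) := by
  unfold forestCount abelPoly
  split_ifs <;> simp [add_comm]

/-- A forest with `k + l` roots splits into one with `k` roots and one with `l` roots. -/
lemma forestCount_add (k l m : ℕ) :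
    ∑ ij ∈ Finset.HasAntidiagonal.antidiagonal m,
        (m.choose ij.1 : ℝ) * forestCount k ij.1 * forestCount l ij.2 =
      forestCount (k + l) m := by
  have := congrArg (Polynomial.eval (k : ℝ)) (abelPoly_add m l)
  simp only [Polynomial.eval_finsetSum, Polynomial.eval_mul, Polynomial.eval_C,
    Polynomial.eval_comp, Polynomial.eval_add, Polynomial.eval_X] at this
  simp only [forestCount_eq_eval]
  push_cast
  rw [← this]
  exact Finset.sum_congr rfl fun _ _ => by ring

lemma forestCount_mono {k l : ℕ} (h : k ≤ l) (m : ℕ) : forestCount k m ≤ forestCount l m := by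
  unfold forestCount
  split_ifs
  · rfl
  · gcongr

/-- Summability for `h` roots suffices: it dominates the series for every smaller number of roots. -/
lemma tsum_forestCount (x : ℝ) (hx : 0 < x) (h : ℕ) (hh : 1 ≤ h)
    (hs : Summable fun m : ℕ => (forestCount h m : ℝ) * x ^ m / m.factorial) :
    ∑' m : ℕ, (forestCount h m : ℝ) * x ^ m / m.factorial =
      (∑' m : ℕ, (forestCount 1 m : ℝ) * x ^ m / m.factorial) ^ h := by
  have hsum : ∀ k ≤ h, Summable fun m : ℕ => (forestCount k m : ℝ) * x ^ m / m.factorial := by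
    intro k hk
    refine Summable.of_nonneg_of_le (fun m => by positivity) (fun m => ?_) hs
    have := forestCount_mono hk m
    gcongr
  suffices H : ∀ k ≤ h, ∑' m : ℕ, (forestCount k m : ℝ) * x ^ m / m.factorial =
      (∑' m : ℕ, (forestCount 1 m : ℝ) * x ^ m / m.factorial) ^ k from H h le_rfl
  intro k
  induction k with
  | zero =>
    intro _
    rw [tsum_eq_single 0]
    · simp [forestCount]
    · intro m hm; simp [forestCount, hm]
  | succ k ih =>
    intro hk
    rw [pow_succ, ← ih (by omega),
      tsum_mul_tsum_eq_tsum_sum_antidiagonal_of_summable_norm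
        (hsum k (by omega)).norm (hsum 1 hh).norm]
    refine tsum_congr fun m => ?_
    rw [← forestCount_add, Finset.sum_mul, Finset.sum_div]
    refine Finset.sum_congr rfl fun ij hij => ?_
    obtain ⟨i, j⟩ := ij
    obtain rfl : i + j = m := by simpa using hij
    have h1 : ((i + j).choose i : ℝ) = (i + j).factorial / (i.factorial * j.factorial) := by
      exact Nat.cast_add_choose ℝ
    have := Nat.factorial_ne_zero i
    have := Nat.factorial_ne_zero j
    have := Nat.factorial_ne_zero (i + j)
    rw [h1, pow_add]
    field_simp

lemma tsum_treeCoef_s19 (x : ℝ) :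
    ∑' n : ℕ, (treeCoef n : ℝ) * x ^ n / (n.factorial : ℝ) =
      x * ∑' m : ℕ, (forestCount 1 m : ℝ) * x ^ m / m.factorial := by
  rw [← tsum_mul_left]
  have hinj : Function.Injective Nat.succ := Nat.succ_injective
  rw [← hinj.tsum_eq]
  · refine tsum_congr fun m => ?_
    have := Nat.factorial_ne_zero m
    rcases m with _ | m
    · simp [treeCoef, forestCount]
    · rw [Nat.factorial_succ (m + 1)]
      simp only [treeCoef, forestCount, Nat.succ_eq_add_one]
      push_cast
      simp
      field_simp
      ring
  · intro n hn
    rcases n with _ | n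
    · simp [treeCoef] at hn
    · exact ⟨n, rfl⟩

/-! ### Counting rooted forests -/

/-- `p` is the parent function of a forest on `R ⊕ M` rooted at `R`. Acyclicity is encoded by a
height function that decreases from a vertex to its parent. -/
def IsForestMap {R M : Type} (p : M → R ⊕ M) : Prop :=
  ∃ d : M → ℕ, ∀ a b, p b = Sum.inr a → d a < d b

lemma not_isForestMap {M : Type} [Nonempty M] [Finite M] {R : Type} [IsEmpty R] (p : M → R ⊕ M) :
    ¬ IsForestMap p := by
  rintro ⟨d, hd⟩
  obtain ⟨b, hb⟩ := Finite.exists_min d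
  rcases hp : p b with r | a
  · exact isEmptyElim r
  · exact absurd (hd a b hp) (not_lt.2 (hb a))

/-- The parent function in which `J` is the set of children of the roots, `f` gives the parents of
the vertices in `J`, and `p` describes the forest rooted at `J` on the remaining vertices. -/
noncomputable def glueMap {R M : Type} (J : Finset M) (f : J → R)
    (p : {v // v ∉ J} → J ⊕ {v // v ∉ J}) : M → R ⊕ M := fun v =>
  if hv : v ∈ J then Sum.inl (f ⟨v, hv⟩) else Sum.inr ((p ⟨v, hv⟩).elim (·.1) (·.1))

lemma glueMap_isForestMap {R M : Type} (J : Finset M) (f : J → R)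
    (p : {v // v ∉ J} → J ⊕ {v // v ∉ J}) (hp : IsForestMap p) :
    IsForestMap (glueMap J f p) := by
  obtain ⟨d, hd⟩ := hp
  refine ⟨fun v => if hv : v ∈ J then 0 else d ⟨v, hv⟩ + 1, fun a b hab => ?_⟩
  by_cases hb : b ∈ J
  · simp [glueMap, hb] at hab
  · simp only [glueMap, hb, dif_neg, not_false_eq_true, Sum.inr.injEq] at hab
    rcases hpb : p ⟨b, hb⟩ with j | u
    · rw [hpb] at hab
      simp only [Sum.elim_inl] at hab
      subst hab
      simp [hb]
    · rw [hpb] at hab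
      simp only [Sum.elim_inr] at hab
      subst hab
      have := hd _ _ hpb
      simp [hb, u.2, this]

lemma glueMap_bijective (R M : Type) [Fintype M] :
    Function.Bijective (fun x : (Σ J : Finset M, (J → R) ×
        {p : {v // v ∉ J} → J ⊕ {v // v ∉ J} // IsForestMap p}) =>
      (⟨glueMap x.1 x.2.1 x.2.2.1, glueMap_isForestMap _ _ _ x.2.2.2⟩ :
        {p : M → R ⊕ M // IsForestMap p})) := by
  constructor
  · rintro ⟨J, f, p, hp⟩ ⟨J', f', p', hp'⟩ h
    simp only [Subtype.mk.injEq] at h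
    have hJ : J = J' := by
      ext v
      have := congrFun h v
      by_cases h1 : v ∈ J <;> by_cases h2 : v ∈ J' <;> simp_all [glueMap]
    subst hJ
    have hf : f = f' := by
      ext v
      have := congrFun h v.1
      simpa [glueMap] using this
    have hpp : p = p' := by
      ext v : 1
      have := congrFun h v.1
      simp only [glueMap, v.2, dif_neg, not_false_eq_true, Sum.inr.injEq] at this
      rcases h1 : p v with a | a <;> rcases h2 : p' v with b | b <;>
        simp only [h1, h2, Sum.elim_inl, Sum.elim_inr, Subtype.coe_eta] at this
      · rw [Subtype.ext this]
      · exact absurd (this ▸ a.2) b.2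
      · exact absurd (this ▸ b.2) a.2
      · rw [Subtype.ext this]
    subst hf hpp
    rfl
  · rintro ⟨p, d, hd⟩
    let J : Finset M := Finset.univ.filter fun v => ∃ r, p v = Sum.inl r
    have hJ : ∀ v, v ∈ J ↔ ∃ r, p v = Sum.inl r := by simp [J]
    choose f hf using fun v : J => (hJ v.1).1 v.2
    have hn : ∀ v : {v // v ∉ J}, ∃ a, p v.1 = Sum.inr a := by
      rintro ⟨v, hv⟩
      rw [hJ] at hv
      cases h : p v with
      | inl r => exact absurd ⟨r, h⟩ hv
      | inr a => exact ⟨a, rfl⟩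
    choose g hg using hn
    let q : {v // v ∉ J} → J ⊕ {v // v ∉ J} := fun v =>
      if hv : g v ∈ J then Sum.inl ⟨g v, hv⟩ else Sum.inr ⟨g v, hv⟩
    refine ⟨⟨J, f, q, fun v => d v.1, fun a b hab => ?_⟩, Subtype.ext (funext fun v => ?_)⟩
    · by_cases hv : g b ∈ J
      · simp [q, hv] at hab
      · simp only [q, hv, dif_neg, not_false_eq_true, Sum.inr.injEq] at hab
        subst hab
        exact hd _ _ (hg b)
    · by_cases hv : v ∈ J
      · simp only [glueMap, hv, dif_pos]
        exact (hf ⟨v, hv⟩).symm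
      · simp only [glueMap, hv, dif_neg, not_false_eq_true]
        rw [hg ⟨v, hv⟩]
        by_cases hv' : g ⟨v, hv⟩ ∈ J <;> simp [q, hv']


/-- Cayley's formula for rooted forests. -/
lemma card_isForestMap (m : ℕ) : ∀ (R M : Type) [Fintype R] [Fintype M], Fintype.card M = m →
    Nat.card {p : M → R ⊕ M // IsForestMap p} = forestCount (Fintype.card R) m := by
  induction m using Nat.strong_induction_on with
  | _ m ih =>
  intro R M _ _ hM
  rcases m with _ | s
  · have : IsEmpty M := Fintype.card_eq_zero_iff.1 hM
    have : Unique {p : M → R ⊕ M // IsForestMap p} :=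
      { default := ⟨isEmptyElim, fun _ => 0, fun a => isEmptyElim a⟩
        uniq := fun p => Subtype.ext (funext fun v => isEmptyElim v) }
    simp [forestCount]
  · rw [← Nat.card_congr (Equiv.ofBijective _ (glueMap_bijective R M)), Nat.card_sigma]
    have key : ∀ J : Finset M, Nat.card ((J → R) ×
        {p : {v // v ∉ J} → J ⊕ {v // v ∉ J} // IsForestMap p}) =
        Fintype.card R ^ J.card * forestCount J.card (s + 1 - J.card) := by
      intro J
      rw [Nat.card_prod]
      have hc : Fintype.card {v // v ∉ J} = s + 1 - J.card := by
        rw [Fintype.card_subtype_compl, hM]; simp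
      congr 1
      · simp
      · rcases J.eq_empty_or_nonempty with rfl | hne
        -- For `J = ∅` the induction hypothesis is unavailable, but without roots there is no forest.
        · have : Nonempty M := Fintype.card_pos_iff.1 (by omega)
          have : Nonempty {v : M // v ∉ (∅ : Finset M)} := ⟨⟨Classical.arbitrary M, by simp⟩⟩
          have : IsEmpty {p : {v : M // v ∉ (∅ : Finset M)} →
              (∅ : Finset M) ⊕ {v : M // v ∉ (∅ : Finset M)} // IsForestMap p} :=
            ⟨fun p => not_isForestMap p.1 p.2⟩
          simp [forestCount]
        · have := hne.card_pos
          rw [ih (s + 1 - J.card) (by omega) J {v // v ∉ J} hc, Fintype.card_coe]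
    rw [Finset.sum_congr rfl fun J _ => key J, ← forestCount_recursion,
      ← Finset.powerset_univ,
      Finset.sum_powerset_apply_card
        (fun j => Fintype.card R ^ j * forestCount j (s + 1 - j)),
      Finset.card_univ, hM]
    simp

/-! ### Graphs with prescribed 2-core as rooted forests -/

/-- The graph on `R ⊕ M` formed by `H` on `R` and an edge from each vertex of `M` to its parent. -/
def attach {R M : Type} (H : SimpleGraph R) (p : M → R ⊕ M) : SimpleGraph (R ⊕ M) where
  Adj x y := x ≠ y ∧ ((∃ a b, x = Sum.inl a ∧ y = Sum.inl b ∧ H.Adj a b) ∨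
    (∃ v, x = Sum.inr v ∧ y = p v) ∨ (∃ v, y = Sum.inr v ∧ x = p v))
  symm := ⟨by
    rintro x y ⟨hne, ⟨a, b, hx, hy, h⟩ | h | h⟩
    · exact ⟨hne.symm, Or.inl ⟨b, a, hy, hx, h.symm⟩⟩
    · exact ⟨hne.symm, Or.inr (Or.inr h)⟩
    · exact ⟨hne.symm, Or.inr (Or.inl h)⟩⟩
  loopless := ⟨fun x h => h.1 rfl⟩

lemma IsForestMap.ne {R M : Type} {p : M → R ⊕ M} (hp : IsForestMap p) (v : M) :
    p v ≠ Sum.inr v := by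
  obtain ⟨d, hd⟩ := hp
  exact fun h => lt_irrefl _ (hd v v h)

lemma attach_adj_parent {R M : Type} (H : SimpleGraph R) {p : M → R ⊕ M} (hp : IsForestMap p)
    (v : M) : (attach H p).Adj (Sum.inr v) (p v) :=
  ⟨(hp.ne v).symm, Or.inr (Or.inl ⟨v, rfl, rfl⟩)⟩

lemma attach_comap {R M : Type} (H : SimpleGraph R) (p : M → R ⊕ M) :
    (attach H p).comap Sum.inl = H := by
  ext a b
  simp only [SimpleGraph.comap_adj, attach]
  constructor
  · rintro ⟨-, ⟨a', b', ha, hb, h⟩ | ⟨v, h, -⟩ | ⟨v, h, -⟩⟩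
    · cases ha; cases hb; exact h
    · cases h
    · cases h
  · exact fun h => ⟨by simpa using h.ne, Or.inl ⟨a, b, rfl, rfl, h⟩⟩

lemma attach_connected {R M : Type} {H : SimpleGraph R} (hH : H.Connected) {p : M → R ⊕ M}
    (hp : IsForestMap p) : (attach H p).Connected := by
  obtain ⟨a₀⟩ := hH.nonempty
  have hinl : ∀ a, (attach H p).Reachable (Sum.inl a) (Sum.inl a₀) := by
    intro a
    let φ : H →g attach H p :=
      ⟨Sum.inl, fun {a b} h => ⟨by simpa using h.ne, Or.inl ⟨a, b, rfl, rfl, h⟩⟩⟩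
    exact (hH.preconnected a a₀).map φ
  have hinr : ∀ v, (attach H p).Reachable (Sum.inr v) (Sum.inl a₀) := by
    obtain ⟨d, hd⟩ := id hp
    intro v
    induction hn : d v using Nat.strong_induction_on generalizing v with
    | _ n ih =>
      refine (attach_adj_parent H hp v).reachable.trans ?_
      rcases hv : p v with a | u
      · exact hinl a
      · exact ih (d u) (hn ▸ hd u v hv) u rfl
  have hall : ∀ x, (attach H p).Reachable x (Sum.inl a₀) := by
    rintro (a | v)
    exacts [hinl a, hinr v]
  have : Nonempty (R ⊕ M) := ⟨Sum.inl a₀⟩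
  exact ⟨fun x y => (hall x).trans (hall y).symm⟩

lemma two_le_ncard {α : Type} [Finite α] {s : Set α} {a b : α} (ha : a ∈ s) (hb : b ∈ s)
    (hab : a ≠ b) : 2 ≤ s.ncard :=
  (Set.one_lt_ncard_iff (Set.toFinite s)).2 ⟨a, b, ha, hb, hab⟩

/-- Each vertex of an embedded copy of a graph of minimum degree at least 2 has at least two
neighbours in any vertex set containing the copy. -/
lemma two_le_ncard_of_comap {R V : Type} [Finite V] {H : SimpleGraph R}
    (hH : MinDeg2 H) {G : SimpleGraph V} {f : R → V} (hf : Function.Injective f)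
    (hG : G.comap f = H) {W : Set V} (hW : Set.range f ⊆ W) (a : R) :
    2 ≤ Set.ncard {w | w ∈ W ∧ G.Adj (f a) w} := by
  have : Finite R := Finite.of_injective f hf
  obtain ⟨b, c, hb, hc, hbc⟩ := (Set.one_lt_ncard_iff (Set.toFinite _)).1 (hH a)
  subst hG
  exact two_le_ncard (a := f b) (b := f c) ⟨hW ⟨b, rfl⟩, hb⟩ ⟨hW ⟨c, rfl⟩, hc⟩ (hf.ne hbc)

lemma attach_coreSet {R M : Type} [Finite R] [Finite M] {H : SimpleGraph R} (hH : MinDeg2 H)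
    {p : M → R ⊕ M} (hp : IsForestMap p) : coreSet (attach H p) = Set.range Sum.inl := by
  apply Set.Subset.antisymm
  · rintro x ⟨W, hxW, hW⟩
    rcases x with a | v
    · exact ⟨a, rfl⟩
    exfalso
    obtain ⟨d, hd⟩ := hp
    -- A vertex of `W` of maximal height has no child in `W`, so only its parent can be a neighbour.
    obtain ⟨⟨u, hu⟩, hmax⟩ := @Finite.exists_max {u : M // Sum.inr u ∈ W} ℕ _ ⟨⟨v, hxW⟩⟩ _
      (fun u => d u.1)
    have hsub : {w | w ∈ W ∧ (attach H p).Adj (Sum.inr u) w} ⊆ {p u} := by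
      rintro w ⟨hw, -, ⟨a, b, h, -⟩ | ⟨v, h, h'⟩ | ⟨v, h, h'⟩⟩
      · cases h
      · cases h; exact h'
      · subst h
        exact absurd (hd u v h'.symm) (not_lt.2 (hmax ⟨v, hw⟩))
    have h1 := Set.ncard_le_ncard hsub
    have h2 := hW _ hu
    rw [Set.ncard_singleton] at h1
    omega
  · rintro _ ⟨a, rfl⟩
    refine ⟨Set.range Sum.inl, ⟨a, rfl⟩, ?_⟩
    rintro _ ⟨b, rfl⟩
    exact two_le_ncard_of_comap hH Sum.inl_injective (attach_comap H p) subset_rfl b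

/-- If `q v ≠ p v`, then the edge from `v` to `q v` makes `v` the `p`-parent of `w = q v`; by
induction on height `q w = p w = v`, so `q` has the 2-cycle `v, w`. -/
lemma attach_injective {R M : Type} (H : SimpleGraph R) {p q : M → R ⊕ M}
    (hq : IsForestMap q) (h : attach H p = attach H q) : p = q := by
  have hpq : ∀ v, q v = p v ∨ ∃ w, q v = Sum.inr w ∧ p w = Sum.inr v := by
    intro v
    have hadj := attach_adj_parent H hq v
    rw [← h] at hadj
    rcases hadj with ⟨-, ⟨a, b, h, -⟩ | ⟨w, h, h'⟩ | ⟨w, h, h'⟩⟩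
    · cases h
    · cases h; exact Or.inl h'
    · exact Or.inr ⟨w, h, h'.symm⟩
  obtain ⟨d, hd⟩ := hq
  ext v : 1
  induction hn : d v using Nat.strong_induction_on generalizing v with
  | _ n ih =>
    rcases hpq v with h | ⟨w, hw, hw'⟩
    · exact h.symm
    · have h1 := hd w v hw
      have h2 := ih (d w) (hn ▸ h1) w rfl
      have h3 := hd v w (h2 ▸ hw')
      omega

/-- The parent of a vertex outside the core is a neighbour closer to a fixed core vertex `a₀`. An
edge `xy` that is neither in the core nor a parent edge would put `x` and `y` into the core: the
union of the core with all ancestors of `x` and of `y` has minimum degree at least 2. -/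
lemma attach_surjective {R M : Type} [Finite R] [Finite M] {H : SimpleGraph R}
    (hHne : Nonempty R) (hH : MinDeg2 H)
    {G : SimpleGraph (R ⊕ M)} (hG : G.Connected) (hcore : coreSet G = Set.range Sum.inl)
    (hcomap : G.comap Sum.inl = H) : ∃ p : M → R ⊕ M, IsForestMap p ∧ attach H p = G := by
  obtain ⟨a₀⟩ := hHne
  have hstep : ∀ v : M, ∃ y, G.Adj (Sum.inr v) y ∧
      G.dist y (Sum.inl a₀) < G.dist (Sum.inr v) (Sum.inl a₀) := by
    intro v
    obtain ⟨w, hw⟩ := hG.exists_walk_length_eq_dist (Sum.inr v) (Sum.inl a₀)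
    cases w with
    | cons hadj w' =>
      refine ⟨_, hadj, ?_⟩
      have := SimpleGraph.dist_le w'
      simp only [SimpleGraph.Walk.length_cons] at hw
      omega
  choose p hadj hdist using hstep
  have hd : ∀ a b, p b = Sum.inr a →
      G.dist (Sum.inr a) (Sum.inl a₀) < G.dist (Sum.inr b) (Sum.inl a₀) :=
    fun a b hab => hab ▸ hdist b
  refine ⟨p, ⟨_, hd⟩, le_antisymm ?_ ?_⟩
  · rintro x y ⟨-, ⟨a, b, rfl, rfl, h⟩ | ⟨v, rfl, rfl⟩ | ⟨v, rfl, rfl⟩⟩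
    · subst hcomap; exact h
    · exact hadj v
    · exact (hadj v).symm
  · intro x y hxy
    by_contra hnot
    -- `s` relates a non-root to its parent.
    let s : R ⊕ M → R ⊕ M → Prop := fun u t => ∃ v, u = Sum.inr v ∧ t = p v
    let W : Set (R ⊕ M) := {z | z ∈ Set.range Sum.inl ∨
      Relation.ReflTransGen s x z ∨ Relation.ReflTransGen s y z}
    -- A vertex `v` of `W` outside the core has a neighbour in `W` other than its parent: its child on
    -- the ancestral path from `x`, or `y` if `v = x`.
    have hsecond : ∀ (x y : R ⊕ M) (v : M), G.Adj x y → ¬ (attach H p).Adj x y → y ∈ W →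
        (∀ z, Relation.ReflTransGen s x z → z ∈ W) → Relation.ReflTransGen s x (Sum.inr v) →
        ∃ c ∈ W, G.Adj (Sum.inr v) c ∧ c ≠ p v := by
      intro x y v hxy hnot hyW hxW hxv
      rcases Relation.ReflTransGen.cases_tail hxv with h | ⟨c, hc, v', rfl, hv'⟩
      · subst h
        exact ⟨y, hyW, hxy, fun hy => hnot ⟨hxy.ne, Or.inr (Or.inl ⟨v, rfl, hy⟩)⟩⟩
      · refine ⟨Sum.inr v', hxW _ hc, hv' ▸ (hadj v').symm, fun h => ?_⟩
        have h1 := hd _ _ h.symm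
        have h2 := hd _ _ hv'.symm
        omega
    have hW : ∀ u ∈ W, 2 ≤ Set.ncard {w | w ∈ W ∧ G.Adj u w} := by
      rintro (a | v) hu
      · exact two_le_ncard_of_comap hH Sum.inl_injective hcomap (fun z hz => Or.inl hz) a
      · have hpW : p v ∈ W := by
          rcases hu with ⟨_, h⟩ | h | h
          · cases h
          · exact Or.inr (Or.inl (h.tail ⟨v, rfl, rfl⟩))
          · exact Or.inr (Or.inr (h.tail ⟨v, rfl, rfl⟩))
        have : ∃ c ∈ W, G.Adj (Sum.inr v) c ∧ c ≠ p v := by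
          rcases hu with ⟨_, h⟩ | h | h
          · cases h
          · exact hsecond x y v hxy hnot (Or.inr (Or.inr .refl)) (fun z hz => Or.inr (Or.inl hz)) h
          · exact hsecond y x v hxy.symm (fun h => hnot h.symm) (Or.inr (Or.inl .refl))
              (fun z hz => Or.inr (Or.inr hz)) h
        obtain ⟨c, hcW, hc, hne⟩ := this
        exact two_le_ncard ⟨hcW, hc⟩ ⟨hpW, hadj v⟩ hne
    have hx : x ∈ coreSet G := ⟨W, Or.inr (Or.inl .refl), hW⟩
    have hy : y ∈ coreSet G := ⟨W, Or.inr (Or.inr .refl), hW⟩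
    rw [hcore] at hx hy
    obtain ⟨a, rfl⟩ := hx
    obtain ⟨b, rfl⟩ := hy
    refine hnot ⟨hxy.ne, Or.inl ⟨a, b, rfl, rfl, ?_⟩⟩
    subst hcomap
    exact hxy

/-! ### Double counting of marked cores -/

lemma map_mem_coreSet {V W : Type} {G : SimpleGraph V} {G' : SimpleGraph W} (e : G ≃g G')
    {x : V} (hx : x ∈ coreSet G) : e x ∈ coreSet G' := by
  obtain ⟨S, hxS, hS⟩ := hx
  refine ⟨e '' S, ⟨x, hxS, rfl⟩, ?_⟩
  rintro _ ⟨u, hu, rfl⟩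
  have : {w | w ∈ e '' S ∧ G'.Adj (e u) w} = e '' {w | w ∈ S ∧ G.Adj u w} := by
    ext w
    constructor
    · rintro ⟨⟨z, hz, rfl⟩, h⟩
      exact ⟨z, ⟨hz, e.map_adj_iff.1 h⟩, rfl⟩
    · rintro ⟨z, ⟨hz, h⟩, rfl⟩
      exact ⟨⟨z, hz, rfl⟩, e.map_adj_iff.2 h⟩
  rw [this, Set.ncard_image_of_injective _ e.injective]
  exact hS u hu

lemma coreSet_comap {V W : Type} (e : V ≃ W) (G : SimpleGraph W) :
    coreSet (G.comap e) = e ⁻¹' coreSet G := by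
  let φ : G.comap e ≃g G := SimpleGraph.Iso.comap e G
  ext x
  constructor
  · exact fun hx => map_mem_coreSet φ hx
  · intro hx
    have := map_mem_coreSet φ.symm hx
    rwa [show φ.symm (e x) = x from e.symm_apply_apply x] at this

/-- `G` is connected and `f` is an isomorphism from `H` onto the 2-core of `G`. -/
def IsMarked {R V : Type} (H : SimpleGraph R) (G : SimpleGraph V) (f : R ↪ V) : Prop :=
  G.Connected ∧ coreSet G = Set.range f ∧ G.comap f = H

/-- The number of graphs with a given marked core. -/
lemma card_isMarked_left {R V : Type} [Fintype R] [Fintype V] {H : SimpleGraph R}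
    (hconn : H.Connected) (hH : MinDeg2 H) (f : R ↪ V) :
    Nat.card {G : SimpleGraph V // IsMarked H G f} =
      forestCount (Fintype.card R) (Fintype.card V - Fintype.card R) := by
  let M := {v : V // v ∉ Set.range f}
  have hM : Fintype.card M = Fintype.card V - Fintype.card R := by
    rw [Fintype.card_subtype_compl]
    congr 1
    exact (Fintype.card_congr (Equiv.ofInjective f f.injective)).symm
  let e : R ⊕ M ≃ V :=
    (Equiv.sumCongr (Equiv.ofInjective f f.injective) (Equiv.refl _)).trans
      (Equiv.Set.sumCompl (Set.range f))
  have he : ∀ a, e (Sum.inl a) = f a := fun a => rfl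
  have he' : ∀ a, e.symm (f a) = Sum.inl a := fun a => by rw [← he, e.symm_apply_apply]
  rw [← card_isForestMap _ R M hM]
  refine (Nat.card_congr (Equiv.ofBijective
    (fun p : {p : M → R ⊕ M // IsForestMap p} =>
      (⟨(attach H p.1).comap e.symm, ?_, ?_, ?_⟩ : {G : SimpleGraph V // IsMarked H G f}))
    ⟨?_, ?_⟩)).symm
  · exact (SimpleGraph.Iso.comap e.symm (attach H p.1)).connected_iff.2
      (attach_connected hconn p.2)
  · rw [coreSet_comap, attach_coreSet hH p.2]
    ext v
    constructor
    · rintro ⟨a, ha⟩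
      exact ⟨a, by rw [← he, ha, e.apply_symm_apply]⟩
    · rintro ⟨a, rfl⟩
      exact ⟨a, (he' a).symm⟩
  · have : ⇑e.symm ∘ ⇑f = Sum.inl := funext he'
    rw [SimpleGraph.comap_comap, this, attach_comap]
  · rintro ⟨p, _⟩ ⟨q, hq⟩ h
    have h := congrArg (SimpleGraph.comap e) (Subtype.mk.inj h)
    simp only [SimpleGraph.comap_comap, Equiv.symm_comp_self, SimpleGraph.comap_id] at h
    exact Subtype.ext (attach_injective H hq h)
  · rintro ⟨G, hG, hcore, hcomap⟩
    obtain ⟨p, hp, hpG⟩ := attach_surjective (M := M) (G := G.comap e) hconn.nonempty hH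
      ((SimpleGraph.Iso.comap e G).connected_iff.2 hG)
      (by
        rw [coreSet_comap, hcore]
        ext x
        constructor
        · rintro ⟨a, ha⟩
          exact ⟨a, e.injective ha⟩
        · rintro ⟨a, rfl⟩
          exact ⟨a, rfl⟩)
      (by rw [SimpleGraph.comap_comap]; exact hcomap)
    refine ⟨⟨p, hp⟩, Subtype.ext ?_⟩
    simp only [hpG, SimpleGraph.comap_comap, Equiv.self_comp_symm, SimpleGraph.comap_id]

lemma IsMarked.exists_iso {R V : Type} {H : SimpleGraph R} {G : SimpleGraph V} {f : R ↪ V}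
    (h : IsMarked H G f) : ∃ ψ : H ≃g G.induce (coreSet G), ∀ a, (ψ a : V) = f a := by
  obtain ⟨-, hcore, rfl⟩ := h
  exact ⟨⟨(Equiv.ofInjective f f.injective).trans (Equiv.setCongr hcore.symm), Iff.rfl⟩,
    fun _ => rfl⟩

/-- The number of markings of the core of a given graph. -/
lemma card_isMarked_right {R V : Type} {H : SimpleGraph R} {G : SimpleGraph V}
    (hG : G.Connected) (φ : G.induce (coreSet G) ≃g H) :
    Nat.card {f : R ↪ V // IsMarked H G f} = Nat.card (H ≃g H) := by
  refine (Nat.card_congr (Equiv.ofBijective (fun χ : H ≃g H =>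
    (⟨⟨fun a => (φ.symm (χ a) : V), ?_⟩, hG, ?_, ?_⟩ : {f : R ↪ V // IsMarked H G f}))
    ⟨?_, ?_⟩)).symm
  · exact Subtype.val_injective.comp (φ.symm.injective.comp χ.injective)
  · ext v
    constructor
    · intro hv
      exact ⟨χ.symm (φ ⟨v, hv⟩), by simp⟩
    · rintro ⟨a, rfl⟩
      exact (φ.symm (χ a)).2
  · ext a b
    have h1 : (G.induce (coreSet G)).Adj (φ.symm (χ a)) (φ.symm (χ b)) ↔ H.Adj a b := by
      rw [φ.symm.map_adj_iff, χ.map_adj_iff]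
    exact h1
  · intro χ χ' h
    ext a
    have h1 := congrArg (fun f : {f : R ↪ V // IsMarked H G f} => f.1 a) h
    exact φ.symm.injective (Subtype.ext h1)
  · rintro ⟨f, hf⟩
    obtain ⟨ψ, hψ⟩ := hf.exists_iso
    refine ⟨ψ.trans φ, Subtype.ext (DFunLike.ext _ _ fun a => ?_)⟩
    simp [← hψ]

/-- Pairs of a graph and a marking of its core by `H`, counted in two ways. -/
lemma ncard_mul_card_aut {h n : ℕ} {H : SimpleGraph (Fin h)} (hconn : H.Connected)
    (hH : MinDeg2 H) :
    Set.ncard {G : SimpleGraph (Fin n) | G.Connected ∧ Nonempty (G.induce (coreSet G) ≃g H)} *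
      Nat.card (H ≃g H) = n.descFactorial h * forestCount h (n - h) := by
  have hswap : Nat.card (Σ G : SimpleGraph (Fin n), {f : Fin h ↪ Fin n // IsMarked H G f}) =
      Nat.card (Σ f : Fin h ↪ Fin n, {G : SimpleGraph (Fin n) // IsMarked H G f}) :=
    Nat.card_congr ⟨fun x => ⟨x.2.1, x.1, x.2.2⟩, fun x => ⟨x.2.1, x.1, x.2.2⟩,
      fun _ => rfl, fun _ => rfl⟩
  rw [Nat.card_sigma, Nat.card_sigma] at hswap
  simp only [card_isMarked_left hconn hH, Finset.sum_const, Finset.card_univ,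
    Fintype.card_embedding_eq, Fintype.card_fin, smul_eq_mul] at hswap
  rw [← hswap, Set.ncard_eq_toFinset_card', ← smul_eq_mul, ← Finset.sum_const]
  refine Finset.sum_subset_zero_on_sdiff (Finset.subset_univ _) (fun G hG => ?_) fun G hG => ?_
  · have : IsEmpty {f : Fin h ↪ Fin n // IsMarked H G f} := by
      refine ⟨fun f => ?_⟩
      obtain ⟨ψ, -⟩ := f.2.exists_iso
      exact (Finset.mem_sdiff.1 hG).2 (Set.mem_toFinset.2 ⟨f.2.1, ⟨ψ.symm⟩⟩)
    exact Nat.card_of_isEmpty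
  · obtain ⟨hG, ⟨φ⟩⟩ := Set.mem_toFinset.1 hG
    exact (card_isMarked_right hG φ).symm


/-- Let `𝒢` be a decomposable trimmable class (closed under
isomorphism, containing the null graph), `ρ₀ > 0` with `G(ρ₀) < ∞`,
`ρ₂ = T•(ρ₀)`, and `H` a connected graph of minimum degree at least 2 in `𝒢`,
on `h` vertices.  Summing over the (labelled) connected graphs in `𝒢` whose 2-core
is isomorphic to `H` — which equals the sum `∑_{G ∈ H̃} ρ₀^{v(G)}/aut(G)` over the
corresponding unlabelled graphs — we get `ρ₂^{v(H)}/aut(H)`. -/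
theorem stmt_19 (𝒢 : ∀ ⦃V : Type⦄ [Fintype V], SimpleGraph V → Prop)
    (hiso : ∀ (V W : Type) [Fintype V] [Fintype W] (G : SimpleGraph V)
      (H : SimpleGraph W), Nonempty (G ≃g H) → 𝒢 G → 𝒢 H)
    (hdec : Decomposable 𝒢) (htrim : Trimmable 𝒢)
    (hnull : 𝒢 (⊥ : SimpleGraph (Fin 0)))
    (ρ₀ : ℝ) (h0 : 0 < ρ₀)
    (hsum : Summable (fun n : ℕ =>
      (Set.ncard {G : SimpleGraph (Fin n) | 𝒢 G} : ℝ) * ρ₀ ^ n / (Nat.factorial n : ℝ)))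
    (ρ₂ : ℝ)
    (hρ₂ : ρ₂ = ∑' n : ℕ, (treeCoef n : ℝ) * ρ₀ ^ n / (Nat.factorial n : ℝ))
    (h : ℕ) (H : SimpleGraph (Fin h))
    (hHconn : H.Connected) (hHdeg : MinDeg2 H) (hHG : 𝒢 H) :
    (∑' n : ℕ,
        (Set.ncard {G : SimpleGraph (Fin n) | 𝒢 G ∧ G.Connected ∧
            Nonempty (G.induce (coreSet G) ≃g H)} : ℝ) * ρ₀ ^ n /
          (Nat.factorial n : ℝ)) =
      ρ₂ ^ h / (Nat.card (H ≃g H) : ℝ) := by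
  have haut : 0 < Nat.card (H ≃g H) := by
    have : Finite (H ≃g H) := DFunLike.finite _
    exact Nat.card_pos
  have haut' : (Nat.card (H ≃g H) : ℝ) ≠ 0 := by exact_mod_cast haut.ne'
  have hh : 1 ≤ h := by
    obtain ⟨a⟩ := hHconn.nonempty
    exact a.pos
  have hset : ∀ n, {G : SimpleGraph (Fin n) | 𝒢 G ∧ G.Connected ∧
      Nonempty (G.induce (coreSet G) ≃g H)} =
      {G : SimpleGraph (Fin n) | G.Connected ∧ Nonempty (G.induce (coreSet G) ≃g H)} := by
    intro n
    ext G
    refine ⟨fun hG => hG.2, fun hG => ⟨?_, hG⟩⟩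
    obtain ⟨-, ⟨φ⟩⟩ := hG
    exact (htrim _ G).2 (hiso _ _ _ _ ⟨φ.symm⟩ hHG)
  set L : ℕ → ℕ := fun n => Set.ncard {G : SimpleGraph (Fin n) | 𝒢 G ∧ G.Connected ∧
      Nonempty (G.induce (coreSet G) ≃g H)} with hL
  have hcount : ∀ n, L n * Nat.card (H ≃g H) = n.descFactorial h * forestCount h (n - h) := by
    intro n
    rw [← ncard_mul_card_aut hHconn hHdeg, ← hset n]
  have hLsum : Summable fun n : ℕ => (L n : ℝ) * ρ₀ ^ n / (n.factorial : ℝ) := by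
    refine Summable.of_nonneg_of_le (fun n => by positivity) (fun n => ?_) hsum
    have : L n ≤ Set.ncard {G : SimpleGraph (Fin n) | 𝒢 G} :=
      Set.ncard_le_ncard (fun G hG => hG.1)
    gcongr
  have hzero : ∀ n < h, (L n : ℝ) * ρ₀ ^ n / (n.factorial : ℝ) = 0 := by
    intro n hn
    have := hcount n
    rw [Nat.descFactorial_of_lt hn, zero_mul] at this
    have : L n = 0 := (Nat.mul_eq_zero.1 this).resolve_right haut.ne'
    simp [this]
  have hshift : ∀ m, (L (m + h) : ℝ) * ρ₀ ^ (m + h) / ((m + h).factorial : ℝ) =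
      ρ₀ ^ h / Nat.card (H ≃g H) * ((forestCount h m : ℝ) * ρ₀ ^ m / m.factorial) := by
    intro m
    have h1 := hcount (m + h)
    have h2 := Nat.factorial_mul_descFactorial (Nat.le_add_left h m)
    rw [Nat.add_sub_cancel] at h1 h2
    have h1' : (L (m + h) : ℝ) * Nat.card (H ≃g H) =
        (m + h).descFactorial h * forestCount h m := by exact_mod_cast h1
    have h2' : (m.factorial : ℝ) * (m + h).descFactorial h = (m + h).factorial := by
      exact_mod_cast h2
    have hm : (m.factorial : ℝ) ≠ 0 := by exact_mod_cast Nat.factorial_ne_zero m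
    have hmh : ((m + h).factorial : ℝ) ≠ 0 := by exact_mod_cast Nat.factorial_ne_zero (m + h)
    rw [div_mul_div_comm, div_eq_div_iff hmh (mul_ne_zero haut' hm), pow_add, ← h2']
    linear_combination ρ₀ ^ m * ρ₀ ^ h * m.factorial * h1'
  -- The forest series is a positive multiple of a tail of the convergent left side.
  have hforest : Summable fun m : ℕ => (forestCount h m : ℝ) * ρ₀ ^ m / m.factorial := by
    have := (summable_nat_add_iff h).2 hLsum
    simp only [hshift] at this
    exact (summable_mul_left_iff (by positivity)).1 this
  change ∑' n : ℕ, (L n : ℝ) * ρ₀ ^ n / (n.factorial : ℝ) = _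
  rw [← hLsum.sum_add_tsum_nat_add h,
    Finset.sum_eq_zero fun n hn => hzero n (Finset.mem_range.1 hn), zero_add]
  simp only [hshift]
  rw [tsum_mul_left, tsum_forestCount ρ₀ h0 h hh hforest, hρ₂, tsum_treeCoef_s19, mul_pow]
  ring
end
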